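/- arXiv:2407.15183 — 3 statements merged into one kernel-verified Lean document; each statement's English description precedes it below -/
import Mathlib

section
/- Let m, n, c be positive integers with c ≡ 1 (mod 4), m ≡ 1 (mod 4) and n ≡ 3 (mod 4). If m ≥ 9, n ≥ 7, and (m, n) ≠ (9, 7), then there exists an integer Heffter array set IHS(m, n; c). -/
/-- An integer Heffter array set `IHS(m, n; c)`: a family of `c` totally filled
`m × n` integer arrays such that the absolute values of all `c·m·n` entries are
pairwise distinct and their set is exactly `{1, …, m·n·c}`, and every row and
column of each array sums to `0`. -/
def IsIHS (m n c : ℕ) (A : Fin c → Matrix (Fin m) (Fin n) ℤ) : Prop :=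
  Function.Injective (fun p : Fin c × Fin m × Fin n => |A p.1 p.2.1 p.2.2|) ∧
  (∀ x : ℤ, (1 ≤ x ∧ x ≤ (m : ℤ) * n * c) ↔ ∃ l i j, |A l i j| = x) ∧
  (∀ l i, ∑ j, A l i j = 0) ∧
  (∀ l j, ∑ i, A l i j = 0)


/-! ### Transport from arbitrary finite index types -/

lemma ihs_of_fintype {γ α β : Type} [Fintype γ] [Fintype α] [Fintype β] (m n c : ℕ)
    (hγ : Fintype.card γ = c) (hα : Fintype.card α = m) (hβ : Fintype.card β = n)
    (A : γ → α → β → ℤ)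
    (hrow : ∀ l i, ∑ j, A l i j = 0) (hcol : ∀ l j, ∑ i, A l i j = 0)
    (hsurj : ∀ x : ℤ, 1 ≤ x → x ≤ (m : ℤ) * n * c → ∃ l i j, |A l i j| = x) :
    ∃ A : Fin c → Matrix (Fin m) (Fin n) ℤ, IsIHS m n c A := by
  classical
  let eγ : Fin c ≃ γ := (Fintype.equivFinOfCardEq hγ).symm
  let eα : Fin m ≃ α := (Fintype.equivFinOfCardEq hα).symm
  let eβ : Fin n ≃ β := (Fintype.equivFinOfCardEq hβ).symm
  let A' : Fin c → Matrix (Fin m) (Fin n) ℤ := fun l i j => A (eγ l) (eα i) (eβ j)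
  let f : Fin c × Fin m × Fin n → ℤ := fun p => |A' p.1 p.2.1 p.2.2|
  have hs : ∀ x : ℤ, 1 ≤ x → x ≤ (m : ℤ) * n * c → ∃ p, f p = x := by
    intro x h1 h2
    obtain ⟨l, i, j, h⟩ := hsurj x h1 h2
    exact ⟨(eγ.symm l, eα.symm i, eβ.symm j), by simpa [f, A'] using h⟩
  have hsub : Finset.Icc (1 : ℤ) ((m : ℤ) * n * c) ⊆ Finset.univ.image f := by
    intro x hx
    rw [Finset.mem_Icc] at hx
    obtain ⟨p, hp⟩ := hs x hx.1 hx.2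
    exact Finset.mem_image.2 ⟨p, Finset.mem_univ _, hp⟩
  have hcard : (Finset.Icc (1 : ℤ) ((m : ℤ) * n * c)).card = m * n * c := by
    rw [Int.card_Icc]
    have : ((m : ℤ) * n * c + 1 - 1) = ((m * n * c : ℕ) : ℤ) := by push_cast; ring
    rw [this, Int.toNat_natCast]
  have hdom : (Finset.univ : Finset (Fin c × Fin m × Fin n)).card = m * n * c := by
    simp [Finset.card_univ, Fintype.card_prod]; ring
  have hle : (Finset.univ.image f).card ≤ (Finset.Icc (1 : ℤ) ((m : ℤ) * n * c)).card := by
    rw [hcard, ← hdom]; exact Finset.card_image_le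
  have heq := Finset.eq_of_subset_of_card_le hsub hle
  have hinj : Function.Injective f := by
    have : (Finset.univ.image f).card = (Finset.univ : Finset (Fin c × Fin m × Fin n)).card := by
      rw [← heq, hcard, hdom]
    have h2 := Finset.card_image_iff.1 this
    intro x y h
    exact h2 (by simp) (by simp) h
  refine ⟨A', hinj, ?_, ?_, ?_⟩
  · intro x
    constructor
    · rintro ⟨h1, h2⟩
      obtain ⟨p, hp⟩ := hs x h1 h2
      exact ⟨p.1, p.2.1, p.2.2, hp⟩
    · rintro ⟨l, i, j, h⟩
      have : x ∈ Finset.univ.image f :=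
        Finset.mem_image.2 ⟨(l, i, j), Finset.mem_univ _, h⟩
      rw [← heq, Finset.mem_Icc] at this
      exact this
  · intro l i
    exact (Equiv.sum_comp eβ (fun j => A (eγ l) (eα i) j)).trans (hrow _ _)
  · intro l j
    exact (Equiv.sum_comp eα (fun i => A (eγ l) i (eβ j))).trans (hcol _ _)

/-! ### The triples `s + p = q` -/

/-- The value of kind `kd` (0: `s`, 1: `p`, 2: `q`) of the triple number `t` of family `g`. -/
def tripleV (N : ℤ) (g : Fin 4) (kd : Fin 3) (t : ℤ) : ℤ :=
  match kd with
  | 0 => ![1, 2, 2 * N + 5, 2 * N + 6] g + 2 * t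
  | 1 => ![6 * N + 13, 10 * N + 21, 5 * N + 11, 9 * N + 19] g - t
  | 2 => ![6 * N + 14, 10 * N + 23, 7 * N + 16, 11 * N + 25] g + t

/-- The corner of the special array, carrying the 27 values outside all triples. -/
def cornerS (N : ℤ) : Fin 9 → Fin 3 → ℤ :=
  ![![2*N+1, 2*N+4, -(4*N+5)], ![2*N+3, 8*N+19, -(10*N+22)], ![-(8*N+17), 4*N+11, 4*N+6],
    ![5*N+12, 4*N+8, -(9*N+20)], ![-(2*N+2), -(9*N+21), 11*N+23],
    ![5*N+13, -(12*N+27), 7*N+14], ![-(12*N+26), 8*N+16, 4*N+10],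
    ![4*N+7, -(12*N+25), 8*N+18], ![4*N+9, 7*N+15, -(11*N+24)]]

def grpY : Fin 9 → ℤ := ![8, 0, 5, 7, 1, 4, 6, 2, 3]
def grpE : Fin 9 → ℤ := ![1, 1, -1, 1, 1, -1, 1, 1, -1]
def grpK : Fin 9 → Fin 3 → Fin 3 :=
  ![![2, 1, 0], ![2, 1, 0], ![0, 2, 1], ![0, 2, 1], ![2, 0, 1], ![2, 1, 0], ![1, 0, 2],
    ![0, 2, 1], ![2, 0, 1]]
def kdSign : Fin 3 → ℤ := ![1, 1, -1]
def colSign : Fin 4 → ℤ := ![1, -1, -1, 1]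

/-- Corner of an array in the group number `κ`. -/
def cornerG (N : ℤ) (κ : ℤ) (g : Fin 4) (i : Fin 9) (j : Fin 3) : ℤ :=
  grpE i * kdSign (grpK i j) * tripleV N g (grpK i j) (9 * κ + grpY i)

/-- `3 × 4` block made of four triples. -/
def block34 (N : ℤ) (t : ℤ) (i : Fin 3) (j : Fin 4) : ℤ :=
  kdSign i * colSign j * tripleV N j i t

def r44 : Fin 4 → Fin 4 → ℤ :=
  ![![1, -2, -3, 4], ![-5, 6, 7, -8], ![-9, 10, 11, -12], ![13, -14, -15, 16]]

def r64 : Fin 6 → Fin 4 → ℤ :=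
  ![![23, -8, 3, -18], ![-19, 17, -22, 24], ![4, -9, 21, -16], ![-1, 2, -6, 5],
    ![13, -14, 11, -10], ![-20, 12, -7, 15]]

def shiftBy (B v : ℤ) : ℤ := v.sign * B + v

lemma abs_shiftBy (B v : ℤ) (hB : 0 ≤ B) (hv : v ≠ 0) : |shiftBy B v| = B + |v| := by
  unfold shiftBy
  rcases lt_or_gt_of_ne hv with h | h
  · rw [Int.sign_eq_neg_one_of_neg h, abs_of_neg h, abs_of_neg (by linarith)]; ring
  · rw [Int.sign_eq_one_of_pos h, abs_of_pos h, abs_of_pos (by linarith)]; ring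

lemma shift44_row (B : ℤ) (i : Fin 4) : ∑ j, shiftBy B (r44 i j) = 0 := by
  have h1 : ∀ i, ∑ j, (r44 i j).sign = 0 := by decide
  have h2 : ∀ i, ∑ j, r44 i j = 0 := by decide
  simp only [shiftBy, Finset.sum_add_distrib, ← Finset.sum_mul, h1, h2]; ring

lemma shift44_col (B : ℤ) (j : Fin 4) : ∑ i, shiftBy B (r44 i j) = 0 := by
  have h1 : ∀ j, ∑ i, (r44 i j).sign = 0 := by decide
  have h2 : ∀ j, ∑ i, r44 i j = 0 := by decide
  simp only [shiftBy, Finset.sum_add_distrib, ← Finset.sum_mul, h1, h2]; ring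

lemma shift64_row (B : ℤ) (i : Fin 6) : ∑ j, shiftBy B (r64 i j) = 0 := by
  have h1 : ∀ i, ∑ j, (r64 i j).sign = 0 := by decide
  have h2 : ∀ i, ∑ j, r64 i j = 0 := by decide
  simp only [shiftBy, Finset.sum_add_distrib, ← Finset.sum_mul, h1, h2]; ring

lemma shift64_col (B : ℤ) (j : Fin 4) : ∑ i, shiftBy B (r64 i j) = 0 := by
  have h1 : ∀ j, ∑ i, (r64 i j).sign = 0 := by decide
  have h2 : ∀ j, ∑ i, r64 i j = 0 := by decide
  simp only [shiftBy, Finset.sum_add_distrib, ← Finset.sum_mul, h1, h2]; ring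

lemma cover44 : ∀ v : Fin 16, ∃ i j, |r44 i j| = (v : ℕ) + 1 ∧ r44 i j ≠ 0 := by decide
lemma cover64 : ∀ v : Fin 24, ∃ i j, |r64 i j| = (v : ℕ) + 1 ∧ r64 i j ≠ 0 := by decide

lemma block34_row (N t : ℤ) (i : Fin 3) : ∑ j, block34 N t i j = 0 := by
  fin_cases i <;> simp [block34, tripleV, kdSign, colSign, Fin.sum_univ_succ] <;> ring

lemma block34_col (N t : ℤ) (j : Fin 4) : ∑ i, block34 N t i j = 0 := by
  fin_cases j <;> simp [block34, tripleV, kdSign, colSign, Fin.sum_univ_succ] <;> ring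

lemma cornerS_row (N : ℤ) (i : Fin 9) : ∑ j, cornerS N i j = 0 := by
  fin_cases i <;> simp [cornerS, Fin.sum_univ_succ] <;> ring

lemma cornerS_col (N : ℤ) (j : Fin 3) : ∑ i, cornerS N i j = 0 := by
  fin_cases j <;> simp [cornerS, Fin.sum_univ_succ] <;> ring

lemma cornerG_row (N κ : ℤ) (g : Fin 4) (i : Fin 9) : ∑ j, cornerG N κ g i j = 0 := by
  fin_cases g <;> fin_cases i <;>
    simp [cornerG, tripleV, kdSign, grpE, grpK, grpY, Fin.sum_univ_succ] <;> ring

lemma cornerG_col (N κ : ℤ) (g : Fin 4) (j : Fin 3) : ∑ i, cornerG N κ g i j = 0 := by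
  fin_cases g <;> fin_cases j <;>
    simp [cornerG, tripleV, kdSign, grpE, grpK, grpY, Fin.sum_univ_succ] <;> ring

lemma tripleV_nonneg (N t : ℤ) (g : Fin 4) (kd : Fin 3) (h0 : 0 ≤ t) (h1 : t < N) :
    0 ≤ tripleV N g kd t := by
  fin_cases g <;> fin_cases kd <;> simp [tripleV] <;> omega

lemma abs_unit_mul (e x : ℤ) (he : e = 1 ∨ e = -1) (hx : 0 ≤ x) : |e * x| = x := by
  rcases he with rfl | rfl
  · simpa using hx
  · simpa using hx

lemma abs_cornerG (N κ : ℤ) (g : Fin 4) (i : Fin 9) (j : Fin 3) 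
    (h : 0 ≤ tripleV N g (grpK i j) (9 * κ + grpY i)) :
    |cornerG N κ g i j| = tripleV N g (grpK i j) (9 * κ + grpY i) := by
  have : ∀ i j, grpE i * kdSign (grpK i j) = 1 ∨ grpE i * kdSign (grpK i j) = -1 := by decide
  exact abs_unit_mul _ _ (this i j) h

lemma abs_block34 (N t : ℤ) (i : Fin 3) (j : Fin 4) (h0 : 0 ≤ t) (h1 : t < N) :
    |block34 N t i j| = tripleV N j i t := by
  have : ∀ i j, kdSign i * colSign j = 1 ∨ kdSign i * colSign j = -1 := by decide
  exact abs_unit_mul _ _ (this i j) (tripleV_nonneg N t j i h0 h1)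

lemma grp_cover : ∀ (y : Fin 9) (kd : Fin 3), ∃ i j, grpY i = (y : ℕ) ∧ grpK i j = kd := by
  decide

lemma cornerG_cover (N k t : ℤ) (g : Fin 4) (kd : Fin 3) (h0 : 0 ≤ t) (h1 : t < 9 * k)
    (hN : 9 * k ≤ N) : ∃ κ : ℤ, 0 ≤ κ ∧ κ < k ∧ ∃ i j, |cornerG N κ g i j| = tripleV N g kd t := by
  obtain ⟨i, j, hi, hj⟩ := grp_cover ⟨(t % 9).toNat, by omega⟩ kd
  have hy : grpY i = t % 9 := by rw [hi]; simp; omega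
  have ht : 9 * (t / 9) + grpY i = t := by rw [hy]; omega
  refine ⟨t / 9, by omega, by omega, i, j, ?_⟩
  rw [abs_cornerG, ht, hj]
  rw [ht]; exact tripleV_nonneg _ _ _ _ h0 (by omega)

lemma cornerS_cover (N : ℤ) (hN : 0 ≤ N) (i : Fin 9) (j : Fin 3) (x : ℤ) (hx : 0 ≤ x)
    (h : cornerS N i j = x ∨ cornerS N i j = -x) : ∃ i j, |cornerS N i j| = x := by
  refine ⟨i, j, ?_⟩
  rcases h with h | h
  · rw [h, abs_of_nonneg hx]
  · rw [h, abs_neg, abs_of_nonneg hx]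

lemma triple_or_single (N x : ℤ) (hN : 0 ≤ N) (h1 : 1 ≤ x) (h2 : x ≤ 12 * N + 27) :
    (∃ g kd t, 0 ≤ t ∧ t < N ∧ tripleV N g kd t = x) ∨
    ∃ i j, cornerS N i j = x ∨ cornerS N i j = -x := by
  by_cases hs : x = 2*N+1 ∨ x = 2*N+4 ∨ x = 4*N+5 ∨
    x = 2*N+3 ∨ x = 8*N+19 ∨ x = 10*N+22 ∨
    x = 8*N+17 ∨ x = 4*N+11 ∨ x = 4*N+6 ∨
    x = 5*N+12 ∨ x = 4*N+8 ∨ x = 9*N+20 ∨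
    x = 2*N+2 ∨ x = 9*N+21 ∨ x = 11*N+23 ∨
    x = 5*N+13 ∨ x = 12*N+27 ∨ x = 7*N+14 ∨
    x = 12*N+26 ∨ x = 8*N+16 ∨ x = 4*N+10 ∨
    x = 4*N+7 ∨ x = 12*N+25 ∨ x = 8*N+18 ∨
    x = 4*N+9 ∨ x = 7*N+15 ∨ x = 11*N+24
  · right
    rcases hs with h | h | h | h | h | h | h | h | h | h | h | h | h | h | h | h | h | h | h | h | h | h | h | h | h | h | h
    · exact ⟨0, 0, by rw [h]; simp [cornerS]⟩
    · exact ⟨0, 1, by rw [h]; simp [cornerS]⟩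
    · exact ⟨0, 2, by rw [h]; simp [cornerS]⟩
    · exact ⟨1, 0, by rw [h]; simp [cornerS]⟩
    · exact ⟨1, 1, by rw [h]; simp [cornerS]⟩
    · exact ⟨1, 2, by rw [h]; simp [cornerS]⟩
    · exact ⟨2, 0, by rw [h]; simp [cornerS]⟩
    · exact ⟨2, 1, by rw [h]; simp [cornerS]⟩
    · exact ⟨2, 2, by rw [h]; simp [cornerS]⟩
    · exact ⟨3, 0, by rw [h]; simp [cornerS]⟩
    · exact ⟨3, 1, by rw [h]; simp [cornerS]⟩
    · exact ⟨3, 2, by rw [h]; simp [cornerS]⟩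
    · exact ⟨4, 0, by rw [h]; simp [cornerS]⟩
    · exact ⟨4, 1, by rw [h]; simp [cornerS]⟩
    · exact ⟨4, 2, by rw [h]; simp [cornerS]⟩
    · exact ⟨5, 0, by rw [h]; simp [cornerS]⟩
    · exact ⟨5, 1, by rw [h]; simp [cornerS]⟩
    · exact ⟨5, 2, by rw [h]; simp [cornerS]⟩
    · exact ⟨6, 0, by rw [h]; simp [cornerS]⟩
    · exact ⟨6, 1, by rw [h]; simp [cornerS]⟩
    · exact ⟨6, 2, by rw [h]; simp [cornerS]⟩
    · exact ⟨7, 0, by rw [h]; simp [cornerS]⟩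
    · exact ⟨7, 1, by rw [h]; simp [cornerS]⟩
    · exact ⟨7, 2, by rw [h]; simp [cornerS]⟩
    · exact ⟨8, 0, by rw [h]; simp [cornerS]⟩
    · exact ⟨8, 1, by rw [h]; simp [cornerS]⟩
    · exact ⟨8, 2, by rw [h]; simp [cornerS]⟩
  · left
    have mk : ∀ (g : Fin 4) (kd : Fin 3) (t : ℤ), tripleV N g kd t = x → 0 ≤ t ∧ t < N →
      ∃ g kd t, 0 ≤ t ∧ t < N ∧ tripleV N g kd t = x :=
      fun g kd t h h' => ⟨g, kd, t, h'.1, h'.2, h⟩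
    by_cases c1 : x ≤ 2 * N
    · by_cases hp : x % 2 = 1
      · exact mk 0 0 ((x - 1) / 2) (by simp [tripleV]; omega) (by omega)
      · exact mk 1 0 ((x - 2) / 2) (by simp [tripleV]; omega) (by omega)
    by_cases c2 : x ≤ 4 * N + 4
    · by_cases hp : x % 2 = 1
      · exact mk 2 0 ((x - 2 * N - 5) / 2) (by simp [tripleV]; omega) (by omega)
      · exact mk 3 0 ((x - 2 * N - 6) / 2) (by simp [tripleV]; omega) (by omega)
    by_cases c3 : x ≤ 5 * N + 11
    · exact mk 2 1 (5 * N + 11 - x) (by simp [tripleV]) (by omega)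
    by_cases c4 : x ≤ 6 * N + 13
    · exact mk 0 1 (6 * N + 13 - x) (by simp [tripleV]) (by omega)
    by_cases c5 : x ≤ 7 * N + 13
    · exact mk 0 2 (x - (6 * N + 14)) (by simp [tripleV]) (by omega)
    by_cases c6 : x ≤ 8 * N + 15
    · exact mk 2 2 (x - (7 * N + 16)) (by simp [tripleV]) (by omega)
    by_cases c7 : x ≤ 9 * N + 19
    · exact mk 3 1 (9 * N + 19 - x) (by simp [tripleV]) (by omega)
    by_cases c8 : x ≤ 10 * N + 21
    · exact mk 1 1 (10 * N + 21 - x) (by simp [tripleV]) (by omega)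
    by_cases c9 : x ≤ 11 * N + 22
    · exact mk 1 2 (x - (10 * N + 23)) (by simp [tripleV]) (by omega)
    · exact mk 3 2 (x - (11 * N + 25)) (by simp [tripleV]) (by omega)

/-! ### Assembling the arrays -/

abbrev IdxC (k : ℕ) : Type := Option (Fin k × Fin 4)
abbrev IdxR (a : ℕ) : Type := (Fin 3 ⊕ Fin 6) ⊕ (Fin a × Fin 4)
abbrev IdxK (b : ℕ) : Type := Fin 3 ⊕ (Fin b × Fin 4)

/-- rows of the corner -/
def nine : Fin 3 ⊕ Fin 6 ≃ Fin 9 := finSumFinEquiv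

def bigA (k a b : ℕ) (N : ℤ) (c : ℕ)
    (eb : IdxC k × Fin b ≃ Fin (c * b)) (ea : IdxC k × Fin a ≃ Fin (c * a))
    (er : IdxC k × Fin a × Fin b ≃ Fin (c * b * a)) :
    IdxC k → IdxR a → IdxK b → ℤ
  | none, Sum.inl i, Sum.inl j => cornerS N (nine i) j
  | some (κ, g), Sum.inl i, Sum.inl j => cornerG N ((κ : ℕ) : ℤ) g (nine i) j
  | l, Sum.inl (Sum.inl i), Sum.inr (q, j) => block34 N (9 * k + ((eb (l, q) : ℕ) : ℤ)) i j
  | l, Sum.inl (Sum.inr i), Sum.inr (q, j) =>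
      shiftBy (12 * N + 27 + 24 * ((eb (l, q) : ℕ) : ℤ)) (r64 i j)
  | l, Sum.inr (p, i), Sum.inl j => block34 N (9 * k + c * b + ((ea (l, p) : ℕ) : ℤ)) j i
  | l, Sum.inr (p, i), Sum.inr (q, j) =>
      shiftBy (12 * N + 27 + 24 * (c * b) + 16 * ((er (l, p, q) : ℕ) : ℤ)) (r44 i j)

section
variable {k a b : ℕ} {N : ℤ} {c : ℕ}
    {eb : IdxC k × Fin b ≃ Fin (c * b)} {ea : IdxC k × Fin a ≃ Fin (c * a)}
    {er : IdxC k × Fin a × Fin b ≃ Fin (c * b * a)}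

lemma bigA_row (l : IdxC k) (i : IdxR a) : ∑ j, bigA k a b N c eb ea er l i j = 0 := by
  rw [Fintype.sum_sum_type, Fintype.sum_prod_type]
  rcases i with (i | i) | ⟨p, i⟩
  · have h1 : ∑ j, bigA k a b N c eb ea er l (Sum.inl (Sum.inl i)) (Sum.inl j) = 0 := by
      rcases l with _ | ⟨κ, g⟩
      · exact cornerS_row _ _
      · exact cornerG_row _ _ _ _
    rw [h1, zero_add]
    refine Finset.sum_eq_zero fun q _ => ?_
    rcases l with _ | ⟨κ, g⟩ <;> exact block34_row _ _ _
  · have h1 : ∑ j, bigA k a b N c eb ea er l (Sum.inl (Sum.inr i)) (Sum.inl j) = 0 := by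
      rcases l with _ | ⟨κ, g⟩
      · exact cornerS_row _ _
      · exact cornerG_row _ _ _ _
    rw [h1, zero_add]
    refine Finset.sum_eq_zero fun q _ => ?_
    rcases l with _ | ⟨κ, g⟩ <;> exact shift64_row _ _
  · have h1 : ∑ j, bigA k a b N c eb ea er l (Sum.inr (p, i)) (Sum.inl j) = 0 := by
      rcases l with _ | ⟨κ, g⟩ <;> exact block34_col _ _ _
    rw [h1, zero_add]
    refine Finset.sum_eq_zero fun q _ => ?_
    rcases l with _ | ⟨κ, g⟩ <;> exact shift44_row _ _

lemma bigA_col (l : IdxC k) (j : IdxK b) : ∑ i, bigA k a b N c eb ea er l i j = 0 := by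
  rw [Fintype.sum_sum_type, Fintype.sum_prod_type]
  rcases j with j | ⟨q, j⟩
  · have h1 : ∑ i, bigA k a b N c eb ea er l (Sum.inl i) (Sum.inl j) = 0 := by
      rcases l with _ | ⟨κ, g⟩
      · exact (Equiv.sum_comp nine (fun i => cornerS N i j)).trans (cornerS_col _ _)
      · exact (Equiv.sum_comp nine (fun i => cornerG N ((κ : ℕ) : ℤ) g i j)).trans
          (cornerG_col _ _ _ _)
    rw [h1, zero_add]
    refine Finset.sum_eq_zero fun p _ => ?_
    rcases l with _ | ⟨κ, g⟩ <;> exact block34_row _ _ _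
  · have h1 : ∑ i, bigA k a b N c eb ea er l (Sum.inl i) (Sum.inr (q, j)) = 0 := by
      rw [Fintype.sum_sum_type]
      have h2 : ∑ i, bigA k a b N c eb ea er l (Sum.inl (Sum.inl i)) (Sum.inr (q, j)) = 0 := by
        rcases l with _ | ⟨κ, g⟩ <;> exact block34_col _ _ _
      have h3 : ∑ i, bigA k a b N c eb ea er l (Sum.inl (Sum.inr i)) (Sum.inr (q, j)) = 0 := by
        rcases l with _ | ⟨κ, g⟩ <;> exact shift64_col _ _
      rw [h2, h3, zero_add]
    rw [h1, zero_add]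
    refine Finset.sum_eq_zero fun p _ => ?_
    rcases l with _ | ⟨κ, g⟩ <;> exact shift44_col _ _

lemma bigA_surj (hN : N = 9 * k + c * b + c * a) (x : ℤ) (h1 : 1 ≤ x)
    (h2 : x ≤ 12 * N + 27 + 24 * (c * b) + 16 * (c * b * a)) :
    ∃ l i j, |bigA k a b N c eb ea er l i j| = x := by
  have hcb : (0 : ℤ) ≤ (c : ℤ) * b := by positivity
  have hca : (0 : ℤ) ≤ (c : ℤ) * a := by positivity
  have hcba : (0 : ℤ) ≤ (c : ℤ) * b * a := by positivity
  have hN0 : 0 ≤ N := by omega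
  by_cases c1 : x ≤ 12 * N + 27
  · rcases triple_or_single N x hN0 h1 c1 with ⟨g, kd, t, ht0, ht1, rfl⟩ | ⟨i, j, h⟩
    · by_cases d1 : t < 9 * k
      · obtain ⟨κ, hκ0, hκ1, i, j, h⟩ := cornerG_cover N k t g kd ht0 d1 (by omega)
        refine ⟨some (⟨κ.toNat, by omega⟩, g), Sum.inl (nine.symm i), Sum.inl j, ?_⟩
        simp only [bigA, Equiv.apply_symm_apply, Int.toNat_of_nonneg hκ0]
        exact h
      by_cases d2 : t < 9 * k + c * b
      · have hlt : (t - 9 * k).toNat < c * b := by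
          zify; rw [Int.toNat_of_nonneg (by omega)]; omega
        obtain ⟨⟨l, q⟩, hlq⟩ := eb.surjective ⟨(t - 9 * k).toNat, hlt⟩
        refine ⟨l, Sum.inl (Sum.inl kd), Sum.inr (q, g), ?_⟩
        have : bigA k a b N c eb ea er l (Sum.inl (Sum.inl kd)) (Sum.inr (q, g))
            = block34 N t kd g := by
          have e : (9 * k + ((eb (l, q) : ℕ) : ℤ)) = t := by rw [hlq]; simp; omega
          rw [← e]
          rcases l with _ | ⟨κ, g⟩ <;> rfl
        rw [this, abs_block34 _ _ _ _ ht0 ht1]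
      · have hlt : (t - 9 * k - c * b).toNat < c * a := by
          zify; rw [Int.toNat_of_nonneg (by omega)]; omega
        obtain ⟨⟨l, p⟩, hlp⟩ := ea.surjective ⟨(t - 9 * k - c * b).toNat, hlt⟩
        refine ⟨l, Sum.inr (p, g), Sum.inl kd, ?_⟩
        have : bigA k a b N c eb ea er l (Sum.inr (p, g)) (Sum.inl kd)
            = block34 N t kd g := by
          have e : (9 * k + c * b + ((ea (l, p) : ℕ) : ℤ)) = t := by rw [hlp]; simp; omega
          rw [← e]
          rcases l with _ | ⟨κ, g⟩ <;> rfl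
        rw [this, abs_block34 _ _ _ _ ht0 ht1]
    · obtain ⟨i, j, h⟩ := cornerS_cover N hN0 i j x (by omega) h
      refine ⟨none, Sum.inl (nine.symm i), Sum.inl j, ?_⟩
      simp only [bigA, Equiv.apply_symm_apply]
      exact h
  by_cases c2 : x ≤ 12 * N + 27 + 24 * (c * b)
  · obtain ⟨u, hu⟩ : ∃ u, u = x - (12 * N + 27) - 1 := ⟨_, rfl⟩
    have hlt : (u / 24).toNat < c * b := by
      zify; rw [Int.toNat_of_nonneg (by omega)]; omega
    obtain ⟨⟨l, q⟩, hlq⟩ := eb.surjective ⟨(u / 24).toNat, hlt⟩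
    obtain ⟨i, j, hij, hne⟩ := cover64 ⟨(u % 24).toNat, by omega⟩
    refine ⟨l, Sum.inl (Sum.inr i), Sum.inr (q, j), ?_⟩
    have : bigA k a b N c eb ea er l (Sum.inl (Sum.inr i)) (Sum.inr (q, j))
        = shiftBy (12 * N + 27 + 24 * (u / 24)) (r64 i j) := by
      have e : ((eb (l, q) : ℕ) : ℤ) = u / 24 := by rw [hlq]; simp; omega
      rw [← e]
      rcases l with _ | ⟨κ, g⟩ <;> rfl
    rw [this, abs_shiftBy _ _ (by omega) hne, hij]
    simp only
    rw [Int.toNat_of_nonneg (by omega)]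
    omega
  · obtain ⟨u, hu⟩ : ∃ u, u = x - (12 * N + 27 + 24 * (c * b)) - 1 := ⟨_, rfl⟩
    have hlt : (u / 16).toNat < c * b * a := by
      zify; rw [Int.toNat_of_nonneg (by omega)]; omega
    obtain ⟨⟨l, p, q⟩, hlq⟩ := er.surjective ⟨(u / 16).toNat, hlt⟩
    obtain ⟨i, j, hij, hne⟩ := cover44 ⟨(u % 16).toNat, by omega⟩
    refine ⟨l, Sum.inr (p, i), Sum.inr (q, j), ?_⟩
    have : bigA k a b N c eb ea er l (Sum.inr (p, i)) (Sum.inr (q, j))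
        = shiftBy (12 * N + 27 + 24 * (c * b) + 16 * (u / 16)) (r44 i j) := by
      have e : ((er (l, p, q) : ℕ) : ℤ) = u / 16 := by rw [hlq]; simp; omega
      rw [← e]
      rcases l with _ | ⟨κ, g⟩ <;> rfl
    rw [this, abs_shiftBy _ _ (by omega) hne, hij]
    simp only
    rw [Int.toNat_of_nonneg (by omega)]
    omega

end

theorem exists_IHS_c1_m1_n3
    (m n c : ℕ) (hm : 0 < m) (hn : 0 < n) (hc : 0 < c)
    (hcmod : c % 4 = 1) (hmmod : m % 4 = 1) (hnmod : n % 4 = 3)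
    (hm9 : 9 ≤ m) (hn7 : 7 ≤ n) (hne : ¬(m = 9 ∧ n = 7)) :
    ∃ A : Fin c → Matrix (Fin m) (Fin n) ℤ, IsIHS m n c A := by
  obtain ⟨k, rfl⟩ : ∃ k, c = 4 * k + 1 := ⟨c / 4, by omega⟩
  obtain ⟨a, rfl⟩ : ∃ a, m = 9 + 4 * a := ⟨(m - 9) / 4, by omega⟩
  obtain ⟨b, rfl⟩ : ∃ b, n = 3 + 4 * b := ⟨(n - 3) / 4, by omega⟩
  have hC : Fintype.card (IdxC k) = 4 * k + 1 := by simp; ring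
  have hb : Fintype.card (IdxC k × Fin b) = (4 * k + 1) * b := by
    rw [Fintype.card_prod, hC, Fintype.card_fin]
  have ha : Fintype.card (IdxC k × Fin a) = (4 * k + 1) * a := by
    rw [Fintype.card_prod, hC, Fintype.card_fin]
  have hr : Fintype.card (IdxC k × Fin a × Fin b) = (4 * k + 1) * b * a := by
    rw [Fintype.card_prod, Fintype.card_prod, hC, Fintype.card_fin, Fintype.card_fin]; ring
  refine ihs_of_fintype (γ := IdxC k) (α := IdxR a) (β := IdxK b) _ _ _ hC
    (by simp; ring) (by simp; ring)
    (bigA k a b (9 * k + (4 * k + 1 : ℕ) * b + (4 * k + 1 : ℕ) * a) (4 * k + 1)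
      (Fintype.equivFinOfCardEq hb) (Fintype.equivFinOfCardEq ha) (Fintype.equivFinOfCardEq hr))
    bigA_row bigA_col ?_
  intro x h1 h2
  refine bigA_surj rfl x h1 (h2.trans (le_of_eq ?_))
  push_cast
  ring
end

section
/- For every positive integer c with c ≡ 1 (mod 4), there exists an integer Heffter array set IHS(9, 7; c). -/
/-- Skolem sequences of order `c = 4m+1`: the numbers `1..2c` are split into pairs
`a r, a r + r` for `r = 1..c`. -/
theorem skolem_exists (m : ℕ) : ∃ a : ℤ → ℤ, ∀ x : ℤ, 1 ≤ x → x ≤ 2 * (4 * m + 1) →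
    ∃ r : ℤ, 1 ≤ r ∧ r ≤ 4 * m + 1 ∧ (a r = x ∨ a r + r = x) := by
  rcases (by omega : m = 0 ∨ m = 1 ∨ 2 ≤ m) with rfl | rfl | hm
  · refine ⟨fun _ => 1, fun x h1 h2 => ⟨1, by omega, by omega, by dsimp only; omega⟩⟩
  · refine ⟨fun r => if r = 2 then 7 else r, fun x h1 h2 => ?_⟩
    have h3 : x ≤ 10 := by push_cast at h2; omega
    rcases (by omega : x = 1 ∨ x = 2 ∨ (x = 3 ∨ x = 6) ∨ (x = 4 ∨ x = 8) ∨ (x = 5 ∨ x = 10) ∨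
      (x = 7 ∨ x = 9)) with h | h | h | h | h | h
    · exact ⟨1, by norm_num, by norm_num, by norm_num; omega⟩
    · exact ⟨1, by norm_num, by norm_num, by norm_num; omega⟩
    · exact ⟨3, by norm_num, by norm_num, by norm_num; omega⟩
    · exact ⟨4, by norm_num, by norm_num, by norm_num; omega⟩
    · exact ⟨5, by norm_num, by norm_num, by norm_num; omega⟩
    · exact ⟨2, by norm_num, by norm_num, by norm_num; omega⟩
  · obtain ⟨n, hn⟩ : ∃ n : ℤ, n = m := ⟨_, rfl⟩
    rw [← hn]
    have hn2 : 2 ≤ n := by omega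
    clear hn
    refine ⟨fun r => if r % 2 = 0 then 4 * n + (4 * n + 2 - r) / 2 + 1
      else if r = 1 then n + 1
      else if r = 4 * n + 1 then 2 * n + 1
      else if r = 2 * n - 1 then 2 * n + 2
      else if 2 * n + 1 ≤ r then (4 * n + 1 - r) / 2
      else n + (2 * n - 1 - r) / 2 + 2, fun x h1 h2 => ?_⟩
    rcases (by omega : x ≤ n ∨ (x = n + 1 ∨ x = n + 2) ∨ (n + 3 ≤ x ∧ x ≤ 2 * n) ∨
      (x = 2 * n + 1 ∨ x = 6 * n + 2) ∨ (x = 2 * n + 2 ∨ x = 4 * n + 1) ∨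
      (2 * n + 3 ≤ x ∧ x ≤ 3 * n) ∨ (3 * n + 1 ≤ x ∧ x ≤ 4 * n) ∨
      (4 * n + 2 ≤ x ∧ x ≤ 6 * n + 1) ∨ 6 * n + 3 ≤ x) with h | h | h | h | h | h | h | h | h
    · exact ⟨4 * n - 2 * x + 1, by omega, by omega, by dsimp only; split_ifs <;> omega⟩
    · exact ⟨1, by omega, by omega, by dsimp only; split_ifs <;> omega⟩
    · exact ⟨2 * n - 2 * (x - n - 2) - 1, by omega, by omega, by dsimp only; split_ifs <;> omega⟩
    · exact ⟨4 * n + 1, by omega, by omega, by dsimp only; split_ifs <;> omega⟩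
    · exact ⟨2 * n - 1, by omega, by omega, by dsimp only; split_ifs <;> omega⟩
    · exact ⟨2 * n - 2 * (3 * n + 1 - x) - 1, by omega, by omega,
        by dsimp only; split_ifs <;> omega⟩
    · exact ⟨4 * n - 2 * (4 * n + 1 - x) + 1, by omega, by omega,
        by dsimp only; split_ifs <;> omega⟩
    · exact ⟨4 * n - 2 * (x - 4 * n - 1) + 2, by omega, by omega,
        by dsimp only; split_ifs <;> omega⟩
    · exact ⟨4 * n - 2 * (8 * n + 3 - x) + 2, by omega, by omega,
        by dsimp only; split_ifs <;> omega⟩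

/-- Signs of the cells. -/
def cellSign : Fin 9 → Fin 7 → ℤ :=
  ![![1, 1, -1, -1, 1, 1, -1],
    ![-1, 1, 1, -1, 1, 1, -1],
    ![1, -1, 1, 1, -1, -1, 1],
    ![1, -1, 1, 1, -1, -1, 1],
    ![1, 1, -1, 1, -1, 1, -1],
    ![-1, 1, -1, -1, 1, -1, 1],
    ![1, -1, 1, 1, 1, -1, -1],
    ![-1, -1, -1, 1, 1, 1, 1],
    ![-1, 1, 1, -1, -1, -1, 1]]

/-- Shape of the progression in each cell (see `cellVal`). -/
def cellShape : Fin 9 → Fin 7 → Fin 8 :=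
  ![![0, 6, 7, 1, 1, 0, 0],
    ![7, 0, 6, 0, 0, 1, 1],
    ![6, 7, 0, 0, 0, 1, 1],
    ![1, 1, 0, 4, 1, 1, 1],
    ![0, 1, 0, 1, 5, 0, 0],
    ![1, 0, 1, 0, 1, 2, 0],
    ![1, 0, 0, 0, 1, 0, 5],
    ![1, 1, 0, 0, 1, 0, 4],
    ![0, 1, 1, 1, 1, 0, 3]]

/-- Cell `(i,j)` starts after `cellBase i j * c`. -/
def cellBase : Fin 9 → Fin 7 → ℕ :=
  ![![13, 39, 39, 4, 8, 12, 29],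
    ![14, 42, 14, 56, 7, 23, 16],
    ![10, 10, 28, 17, 30, 18, 3],
    ![35, 52, 24, 5, 51, 0, 38],
    ![1, 2, 31, 32, 5, 55, 54],
    ![21, 59, 22, 20, 34, 48, 19],
    ![45, 61, 25, 62, 27, 50, 48],
    ![36, 60, 57, 9, 47, 53, 43],
    ![33, 41, 58, 46, 37, 26, 43]]

/-- The eight progressions, as functions of `r = 1..c`; `a` is the Skolem first position. -/
def cellVal (c r a : ℤ) : Fin 8 → ℤ :=
  ![r, c + 1 - r, 2 * r - 1, 2 * r, 2 * c + 1 - 2 * r, 2 * c + 2 - 2 * r, a, a + r]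

/-- The arrays. -/
def arr (c r a : ℤ) (i : Fin 9) (j : Fin 7) : ℤ :=
  cellSign i j * (cellBase i j * c + cellVal c r a (cellShape i j))

theorem arr_row (c r a : ℤ) (i : Fin 9) : ∑ j, arr c r a i j = 0 := by
  fin_cases i <;>
    simp [Fin.sum_univ_succ, arr, cellSign, cellBase, cellVal, cellShape] <;> ring

theorem arr_col (c r a : ℤ) (j : Fin 7) : ∑ i, arr c r a i j = 0 := by
  fin_cases j <;>
    simp [Fin.sum_univ_succ, arr, cellSign, cellBase, cellVal, cellShape] <;> ring

theorem cellSign_abs : ∀ i j, |cellSign i j| = 1 := by decide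

set_option maxRecDepth 100000 in
theorem block_cover : ∀ b : Fin 63,
    (∃ i j, cellBase i j = b ∧ (cellShape i j = 0 ∨ cellShape i j = 1)) ∨
    (∃ d : Fin 63, ((d : ℕ) = b ∨ (d : ℕ) + 1 = b) ∧
      (((∃ i j, cellBase i j = d ∧ (cellShape i j = 2 ∨ cellShape i j = 4)) ∧
        (∃ i j, cellBase i j = d ∧ (cellShape i j = 3 ∨ cellShape i j = 5))) ∨
       ((∃ i j, cellBase i j = d ∧ cellShape i j = 6) ∧
        (∃ i j, cellBase i j = d ∧ cellShape i j = 7)))) := by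
  decide

theorem arr_abs (c r a : ℤ) (i : Fin 9) (j : Fin 7) (t : ℤ) (ht : 1 ≤ t) (hc : 0 ≤ c)
    (h : cellVal c r a (cellShape i j) = t) : |arr c r a i j| = cellBase i j * c + t := by
  unfold arr
  rw [abs_mul, cellSign_abs, one_mul, h, abs_of_nonneg]
  positivity

theorem arr_surj (c : ℤ) (hc : 0 < c) (a : ℤ → ℤ)
    (ha : ∀ x : ℤ, 1 ≤ x → x ≤ 2 * c → ∃ r, 1 ≤ r ∧ r ≤ c ∧ (a r = x ∨ a r + r = x))
    (x : ℤ) (h1 : 1 ≤ x) (h2 : x ≤ 63 * c) :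
    ∃ r i j, 1 ≤ r ∧ r ≤ c ∧ |arr c r (a r) i j| = x := by
  obtain ⟨b, y, hy1, hyc, hx⟩ : ∃ b y : ℤ, 1 ≤ y ∧ y ≤ c ∧ x = b * c + y := by
    refine ⟨(x - 1) / c, (x - 1) % c + 1, ?_, ?_, ?_⟩
    · have := Int.emod_nonneg (x - 1) hc.ne'
      omega
    · have := Int.emod_lt_of_pos (x - 1) hc
      omega
    · have := Int.mul_ediv_add_emod (x - 1) c
      linarith
  have hb0 : 0 ≤ b := by
    by_contra hneg
    have : b ≤ -1 := by omega
    nlinarith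
  have hb63 : b < 63 := by
    by_contra hneg
    have : 63 ≤ b := by omega
    nlinarith
  lift b to ℕ using hb0
  -- a cell with value `t` works as soon as `x = base * c + t`
  have key : ∀ (r t : ℤ) (i : Fin 9) (j : Fin 7), 1 ≤ r → r ≤ c → 1 ≤ t →
      cellVal c r (a r) (cellShape i j) = t → x = cellBase i j * c + t →
      ∃ r i j, 1 ≤ r ∧ r ≤ c ∧ |arr c r (a r) i j| = x := by
    intro r t i j hr1 hr2 ht hv he
    exact ⟨r, i, j, hr1, hr2, by rw [arr_abs c r (a r) i j t ht hc.le hv, he]⟩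
  rcases block_cover ⟨b, by omega⟩ with ⟨i, j, hB, hT⟩ | ⟨d, hd, hcase⟩
  · dsimp only at hB
    rcases hT with hT | hT
    · exact key y y i j hy1 hyc hy1 (by simp [hT, cellVal]) (by rw [hB, hx])
    · exact key (c + 1 - y) y i j (by omega) (by omega) hy1 (by simp [hT, cellVal]) (by rw [hB, hx])
  · obtain ⟨z, hz1, hzc, hz⟩ : ∃ z : ℤ, 1 ≤ z ∧ z ≤ 2 * c ∧ x = (d : ℕ) * c + z := by
      dsimp only at hd
      rcases hd with hd | hd
      · exact ⟨y, hy1, by omega, by rw [hd, hx]⟩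
      · refine ⟨c + y, by omega, by omega, ?_⟩
        rw [hx, ← hd]
        push_cast
        ring
    rcases hcase with ⟨⟨i, j, hB, hT⟩, ⟨i', j', hB', hT'⟩⟩ | ⟨⟨i, j, hB, hT⟩, ⟨i', j', hB', hT'⟩⟩
    · rcases Int.even_or_odd' z with ⟨w, hw | hw⟩
      · rcases hT' with hT' | hT'
        · exact key w z i' j' (by omega) (by omega) hz1 (by simp [hT', cellVal]; omega)
            (by rw [hB', hz])
        · exact key (c + 1 - w) z i' j' (by omega) (by omega) hz1 (by simp [hT', cellVal]; omega)
            (by rw [hB', hz])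
      · rcases hT with hT | hT
        · exact key (w + 1) z i j (by omega) (by omega) hz1 (by simp [hT, cellVal]; omega)
            (by rw [hB, hz])
        · exact key (c - w) z i j (by omega) (by omega) hz1 (by simp [hT, cellVal]; omega)
            (by rw [hB, hz])
    · obtain ⟨r, hr1, hrc, hr | hr⟩ := ha z hz1 hzc
      · exact key r z i j hr1 hrc hz1 (by simp [hT, cellVal, hr]) (by rw [hB, hz])
      · exact key r z i' j' hr1 hrc hz1 (by simp [hT', cellVal, hr]) (by rw [hB', hz])

theorem exists_IHS_nine_seven
    (c : ℕ) (hc : 0 < c) (hcmod : c % 4 = 1) :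
    ∃ A : Fin c → Matrix (Fin 9) (Fin 7) ℤ, IsIHS 9 7 c A := by
  obtain ⟨m, rfl⟩ : ∃ m, c = 4 * m + 1 := ⟨c / 4, by omega⟩
  obtain ⟨a, ha⟩ := skolem_exists m
  let A : Fin (4 * m + 1) → Matrix (Fin 9) (Fin 7) ℤ :=
    fun l i j => arr ((4 * m + 1 : ℕ) : ℤ) ((l : ℕ) + 1) (a ((l : ℕ) + 1)) i j
  let F : Fin (4 * m + 1) × Fin 9 × Fin 7 → ℤ := fun p => |A p.1 p.2.1 p.2.2|
  have hsurj : Finset.Icc (1 : ℤ) (63 * (4 * m + 1 : ℕ)) ⊆ Finset.univ.image F := by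
    intro x hx
    rw [Finset.mem_Icc] at hx
    obtain ⟨r, i, j, hr1, hr2, h⟩ := arr_surj ((4 * m + 1 : ℕ) : ℤ) (by positivity) a
      (by push_cast; exact ha) x hx.1 hx.2
    rw [Finset.mem_image]
    refine ⟨(⟨(r - 1).toNat, by omega⟩, i, j), Finset.mem_univ _, ?_⟩
    have e : (((r - 1).toNat : ℕ) : ℤ) + 1 = r := by omega
    simp only [F, A, e]
    exact h
  have hcardI : (Finset.Icc (1 : ℤ) (63 * (4 * m + 1 : ℕ))).card = 63 * (4 * m + 1) := by
    rw [Int.card_Icc]; omega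
  have hcardU : (Finset.univ : Finset (Fin (4 * m + 1) × Fin 9 × Fin 7)).card
      = 63 * (4 * m + 1) := by
    simp; ring
  have hle : (Finset.univ.image F).card ≤ 63 * (4 * m + 1) := hcardU ▸ Finset.card_image_le
  have heq : Finset.Icc (1 : ℤ) (63 * (4 * m + 1 : ℕ)) = Finset.univ.image F :=
    Finset.eq_of_subset_of_card_le hsurj (by rw [hcardI]; exact hle)
  refine ⟨A, ?_, ?_, fun l i => arr_row _ _ _ i, fun l j => arr_col _ _ _ j⟩
  · have : Set.InjOn F (Finset.univ : Finset (Fin (4 * m + 1) × Fin 9 × Fin 7)) :=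
      Finset.card_image_iff.mp (by rw [← heq, hcardI, hcardU])
    rw [Finset.coe_univ] at this
    exact Set.injOn_univ.mp this
  · intro x
    have hm : x ∈ Finset.Icc (1 : ℤ) (63 * (4 * m + 1 : ℕ)) ↔ x ∈ Finset.univ.image F := by
      rw [heq]
    rw [Finset.mem_Icc, Finset.mem_image] at hm
    norm_num only [Nat.cast_ofNat] at hm ⊢
    rw [hm]
    constructor
    · rintro ⟨⟨l, i, j⟩, -, h⟩
      exact ⟨l, i, j, h⟩
    · rintro ⟨l, i, j, h⟩
      exact ⟨(l, i, j), Finset.mem_univ _, h⟩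
end

section
/- Let m, n, c be positive integers with c ≡ 3 (mod 4) and either m ≡ n ≡ 1 (mod 4) or m ≡ n ≡ 3 (mod 4). If m ≥ 7, n ≥ 7, and (m, n) ≠ (7, 7), then there exists an integer Heffter array set IHS(m, n; c). -/
namespace IHSaux

/-- Shiftable rectangles: whatever the starts `g i` are, the `4`-runs
`g i, …, g i + 3` can be placed into a `p × q` array with zero row and column sums. -/
def Shift (p q N : ℕ) : Prop :=
  ∀ g : ℕ → ℕ, ∃ M : Fin p → Fin q → ℤ,
    (∀ i, ∑ j, M i j = 0) ∧ (∀ j, ∑ i, M i j = 0) ∧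
    ∀ k < N, ∀ e < 4, ∃ i j, |M i j| = (g k : ℤ) + (e : ℕ)

/-- The same with one additional `8`-run. -/
def ShiftW (p q N : ℕ) : Prop :=
  ∀ (g : ℕ → ℕ) (w : ℕ), ∃ M : Fin p → Fin q → ℤ,
    (∀ i, ∑ j, M i j = 0) ∧ (∀ j, ∑ i, M i j = 0) ∧
    (∀ k < N, ∀ e < 4, ∃ i j, |M i j| = (g k : ℤ) + (e : ℕ)) ∧
    ∀ e < 8, ∃ i j, |M i j| = (w : ℤ) + (e : ℕ)

theorem Shift.transpose {p q N : ℕ} (h : Shift p q N) : Shift q p N := by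
  intro g
  obtain ⟨M, h1, h2, h3⟩ := h g
  refine ⟨fun i j => M j i, h2, h1, fun k hk e he => ?_⟩
  obtain ⟨i, j, hij⟩ := h3 k hk e he
  exact ⟨j, i, hij⟩

theorem ShiftW.transpose {p q N : ℕ} (h : ShiftW p q N) : ShiftW q p N := by
  intro g w
  obtain ⟨M, h1, h2, h3, h4⟩ := h g w
  refine ⟨fun i j => M j i, h2, h1, fun k hk e he => ?_, fun e he => ?_⟩
  · obtain ⟨i, j, hij⟩ := h3 k hk e he
    exact ⟨j, i, hij⟩
  · obtain ⟨i, j, hij⟩ := h4 e he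
    exact ⟨j, i, hij⟩

theorem Shift.append {p q q' N N' : ℕ} (h : Shift p q N) (h' : Shift p q' N') :
    Shift p (q + q') (N + N') := by
  intro g
  obtain ⟨M, h1, h2, h3⟩ := h g
  obtain ⟨M', h1', h2', h3'⟩ := h' (fun k => g (N + k))
  refine ⟨fun i => Fin.append (M i) (M' i), fun i => ?_, fun j => ?_, fun k hk e he => ?_⟩
  · simp [Fin.sum_univ_add, h1, h1']
  · refine Fin.addCases (fun j => ?_) (fun j => ?_) j
    · simp [h2]
    · simp [h2']
  · by_cases hkN : k < N
    · obtain ⟨i, j, hij⟩ := h3 k hkN e he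
      exact ⟨i, Fin.castAdd q' j, by simpa using hij⟩
    · obtain ⟨i, j, hij⟩ := h3' (k - N) (by omega) e he
      refine ⟨i, Fin.natAdd q j, ?_⟩
      rw [show N + (k - N) = k by omega] at hij
      simpa using hij

theorem ShiftW.append {p q q' N N' : ℕ} (h : ShiftW p q N) (h' : Shift p q' N') :
    ShiftW p (q + q') (N + N') := by
  intro g w
  obtain ⟨M, h1, h2, h3, h4⟩ := h g w
  obtain ⟨M', h1', h2', h3'⟩ := h' (fun k => g (N + k))
  refine ⟨fun i => Fin.append (M i) (M' i), fun i => ?_, fun j => ?_, fun k hk e he => ?_,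
    fun e he => ?_⟩
  · simp [Fin.sum_univ_add, h1, h1']
  · refine Fin.addCases (fun j => ?_) (fun j => ?_) j
    · simp [h2]
    · simp [h2']
  · by_cases hkN : k < N
    · obtain ⟨i, j, hij⟩ := h3 k hkN e he
      exact ⟨i, Fin.castAdd q' j, by simpa using hij⟩
    · obtain ⟨i, j, hij⟩ := h3' (k - N) (by omega) e he
      refine ⟨i, Fin.natAdd q j, ?_⟩
      rw [show N + (k - N) = k by omega] at hij
      simpa using hij
  · obtain ⟨i, j, hij⟩ := h4 e he
    exact ⟨i, Fin.castAdd q' j, by simpa using hij⟩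

/-- Covering statement from a placement `pos` of the numbers of the runs. -/
theorem abs_aux {x y : ℤ} (hy : 0 ≤ y) (h : x = y ∨ x = -y) : |x| = y := by
  rcases h with h | h <;> simp [h, abs_of_nonneg hy]

theorem shift44 : Shift 4 4 4 := by
  intro g
  refine ⟨![![(g 0 : ℤ), -(g 0 + 1), -(g 1), g 1 + 1],
      ![-((g 0 : ℤ) + 2), g 0 + 3, g 1 + 2, -(g 1 + 3)],
      ![-(g 2 : ℤ), g 2 + 1, g 3, -(g 3 + 1)],
      ![(g 2 : ℤ) + 2, -(g 2 + 3), -(g 3 + 2), g 3 + 3]], ?_, ?_, ?_⟩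
  · intro i; fin_cases i <;> simp [Fin.sum_univ_four] <;> ring
  · intro i; fin_cases i <;> simp [Fin.sum_univ_four] <;> ring
  · intro k hk e he
    refine ⟨![![0, 0, 1, 1], ![0, 0, 1, 1], ![2, 2, 3, 3], ![2, 2, 3, 3]] ⟨k, hk⟩ ⟨e, he⟩,
      ![![0, 1, 0, 1], ![2, 3, 2, 3], ![0, 1, 0, 1], ![2, 3, 2, 3]] ⟨k, hk⟩ ⟨e, he⟩, ?_⟩
    apply abs_aux (by positivity)
    interval_cases k <;> interval_cases e <;> simp

theorem shift46 : Shift 4 6 6 := by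
  intro g
  refine ⟨![![(g 0 : ℤ), -(g 0 + 1), g 1, -(g 1 + 1), -(g 2), g 2 + 2],
      ![-((g 0 : ℤ) + 2), g 0 + 3, -(g 1 + 2), g 1 + 3, g 2 + 1, -(g 2 + 3)],
      ![-(g 3 : ℤ), g 3 + 1, -(g 4), g 4 + 1, g 5, -(g 5 + 2)],
      ![(g 3 : ℤ) + 2, -(g 3 + 3), g 4 + 2, -(g 4 + 3), -(g 5 + 1), g 5 + 3]], ?_, ?_, ?_⟩
  · intro i; fin_cases i <;> simp [Fin.sum_univ_six] <;> ring
  · intro i; fin_cases i <;> simp [Fin.sum_univ_four] <;> ring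
  · intro k hk e he
    refine ⟨![![0, 0, 1, 1], ![0, 0, 1, 1], ![0, 1, 0, 1], ![2, 2, 3, 3], ![2, 2, 3, 3],
        ![2, 3, 2, 3]] ⟨k, hk⟩ ⟨e, he⟩,
      ![![0, 1, 0, 1], ![2, 3, 2, 3], ![4, 4, 5, 5], ![0, 1, 0, 1], ![2, 3, 2, 3],
        ![4, 4, 5, 5]] ⟨k, hk⟩ ⟨e, he⟩, ?_⟩
    apply abs_aux (by positivity)
    interval_cases k <;> interval_cases e <;> simp

theorem shiftW66 : ShiftW 6 6 7 := by
  intro g w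
  refine ⟨![![-((g 5 : ℤ) + 1), -(w + 6), -(g 3), g 3 + 2, g 5, w + 5],
      ![(g 5 : ℤ) + 2, -(g 1), g 1 + 2, -(g 6 + 2), -(g 5 + 3), g 6 + 1],
      ![(g 4 : ℤ) + 1, g 1 + 1, -(g 1 + 3), -(g 4 + 2), g 0 + 3, -(g 0)],
      ![(w : ℤ) + 1, -(w + 2), g 3 + 3, -(g 3 + 1), -(g 0 + 2), g 0 + 1],
      ![-(g 4 : ℤ), w, -(g 2 + 2), g 4 + 3, g 2 + 3, -(w + 4)],
      ![-((w : ℤ) + 3), w + 7, g 2, g 6, -(g 2 + 1), -(g 6 + 3)]], ?_, ?_, ?_, ?_⟩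
  · intro i; fin_cases i <;> simp [Fin.sum_univ_six] <;> ring
  · intro i; fin_cases i <;> simp [Fin.sum_univ_six] <;> ring
  · intro k hk e he
    refine ⟨![![2, 3, 3, 2], ![1, 2, 1, 2], ![5, 5, 4, 4], ![0, 3, 0, 3], ![4, 2, 2, 4],
        ![0, 0, 1, 1], ![5, 1, 1, 5]] ⟨k, hk⟩ ⟨e, he⟩,
      ![![5, 5, 4, 4], ![1, 1, 2, 2], ![2, 4, 2, 4], ![2, 3, 3, 2], ![0, 0, 3, 3],
        ![4, 0, 0, 4], ![3, 5, 3, 5]] ⟨k, hk⟩ ⟨e, he⟩, ?_⟩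
    apply abs_aux (by positivity)
    interval_cases k <;> interval_cases e <;> simp
  · intro e he
    refine ⟨![4, 3, 3, 5, 4, 0, 0, 5] ⟨e, he⟩, ![1, 0, 1, 0, 5, 5, 1, 1] ⟨e, he⟩, ?_⟩
    apply abs_aux (by positivity)
    interval_cases e <;> simp

theorem Shift.mulRight {p q N : ℕ} (h : Shift p q N) (b : ℕ) :
    Shift p (q * (b + 1)) (N * (b + 1)) := by
  induction b with
  | zero => simpa using h
  | succ b ih => exact ih.append h

theorem Shift.toW {p q N : ℕ} (h : Shift p q (N + 2)) : ShiftW p q N := by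
  intro g w
  obtain ⟨M, h1, h2, h3⟩ := h (fun k => if k < N then g k else w + 4 * (k - N))
  refine ⟨M, h1, h2, fun k hk e he => ?_, fun e he => ?_⟩
  · obtain ⟨i, j, hij⟩ := h3 k (by omega) e he
    exact ⟨i, j, by simpa [hk] using hij⟩
  · by_cases h4 : e < 4
    · obtain ⟨i, j, hij⟩ := h3 N (by omega) e h4
      exact ⟨i, j, by simpa using hij⟩
    · obtain ⟨i, j, hij⟩ := h3 (N + 1) (by omega) (e - 4) (by omega)
      refine ⟨i, j, ?_⟩
      simp at hij
      rw [hij]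
      push_cast [show 4 ≤ e by omega]
      ring

theorem shiftW_even (a b : ℕ) :
    ShiftW (2 * (2 * a + 2)) (2 * (2 * b + 2)) ((2 * a + 2) * (2 * b + 2) - 2) := by
  have h := ((shift44.mulRight b).transpose.mulRight a).transpose
  have e1 : 4 * (a + 1) = 2 * (2 * a + 2) := by ring
  have e2 : 4 * (b + 1) = 2 * (2 * b + 2) := by ring
  have e3 : 4 * (b + 1) * (a + 1) = (2 * a + 2) * (2 * b + 2) - 2 + 2 := by
    have : 2 ≤ (2 * a + 2) * (2 * b + 2) := by nlinarith
    rw [Nat.sub_add_cancel this]; ring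
  rw [e3, e1, e2] at h
  exact h.toW

theorem shiftW_odd_row (b : ℕ) : ShiftW 6 (6 + 4 * b) (7 + 6 * b) := by
  rcases b with _ | b
  · exact shiftW66
  · exact shiftW66.append (shift46.transpose.mulRight b)

theorem shift4_row (b : ℕ) : Shift 4 (6 + 4 * b) (6 + 4 * b) := by
  rcases b with _ | b
  · exact shift46
  · exact shift46.append (shift44.mulRight b)

theorem shiftW_odd (a b : ℕ) :
    ShiftW (2 * (2 * a + 3)) (2 * (2 * b + 3)) ((2 * a + 3) * (2 * b + 3) - 2) := by
  have h : ShiftW (6 + 4 * a) (6 + 4 * b) (7 + 6 * b + (6 + 4 * b) * a) := by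
    rcases a with _ | a
    · simpa using shiftW_odd_row b
    · have := ((shiftW_odd_row b).transpose.append
        ((shift4_row b).transpose.mulRight a)).transpose
      exact this
  have e1 : 6 + 4 * a = 2 * (2 * a + 3) := by ring
  have e2 : 6 + 4 * b = 2 * (2 * b + 3) := by ring
  have e3 : 7 + 6 * b + (6 + 4 * b) * a = (2 * a + 3) * (2 * b + 3) - 2 := by
    have : (2 * a + 3) * (2 * b + 3) = 7 + 6 * b + (6 + 4 * b) * a + 2 := by ring
    omega
  rw [e3, e1, e2] at h
  exact h


/-- Weight vector `(1, 1, -2)`. -/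
def wt (i : Fin 3) : ℤ := if i = 2 then -2 else 1

/-- Kotzig-type permutations of `[-h, h]`. -/
def kap (h : ℤ) (i : Fin 3) (t : ℤ) : ℤ :=
  if i = 0 then t
  else if i = 1 then (if t ≤ 0 then -2 * t - h else -2 * t + h + 1)
  else (if t ≤ 0 then t + h else t - h - 1)

theorem kap_sum (h t : ℤ) : kap h 0 t + kap h 1 t + kap h 2 t = 0 := by
  have e1 : kap h 1 t = if t ≤ 0 then -2 * t - h else -2 * t + h + 1 := rfl
  have e2 : kap h 2 t = if t ≤ 0 then t + h else t - h - 1 := rfl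
  have e0 : kap h 0 t = t := rfl
  rw [e0, e1, e2]
  split_ifs <;> ring

theorem kap_surj (h : ℕ) (i : Fin 3) (r : ℤ) (h1 : -(h : ℤ) ≤ r) (h2 : r ≤ h) :
    ∃ l : Fin (2 * h + 1), kap h i ((l : ℕ) - (h : ℤ)) = r := by
  suffices H : ∃ t : ℤ, -(h : ℤ) ≤ t ∧ t ≤ h ∧ kap h i t = r by
    obtain ⟨t, ha, hb, hk⟩ := H
    refine ⟨⟨(t + h).toNat, by omega⟩, ?_⟩
    have : (((t + h).toNat : ℕ) : ℤ) - h = t := by omega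
    simp only [this, hk]
  have hi : i = 0 ∨ i = 1 ∨ i = 2 := by omega
  rcases hi with rfl | rfl | rfl
  · exact ⟨r, h1, h2, by simp [kap]⟩
  · rcases Int.emod_two_eq_zero_or_one (r + h) with hp | hp
    · refine ⟨-((r + h) / 2), by omega, by omega, ?_⟩
      simp only [kap]
      norm_num
      split_ifs <;> omega
    · refine ⟨(h + 1 - r) / 2, by omega, by omega, ?_⟩
      simp only [kap]
      norm_num
      split_ifs <;> omega
  · by_cases hr : 0 ≤ r
    · refine ⟨r - h, by omega, by omega, ?_⟩
      simp only [kap]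
      norm_num
      split_ifs <;> omega
    · refine ⟨r + h + 1, by omega, by omega, ?_⟩
      simp only [kap]
      norm_num
      split_ifs <;> omega

/-- A value `D + (κ)` covers the whole interval around `c * q` if `D = ± c q`. -/
theorem coarse (h : ℕ) (i : Fin 3) (D q x : ℤ) (c : ℤ) (s e : ℤ)
    (hs : s = 1 ∨ s = -1) (he : e = 1 ∨ e = -1)
    (hD : D = q ∨ D = -q) (hx : 0 ≤ x) (h1 : c * q - h ≤ x) (h2 : x ≤ c * q + h) :
    ∃ l : Fin (2 * h + 1), |e * (c * D + s * kap h i ((l : ℕ) - (h : ℤ)))| = x := by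
  have key : ∃ r : ℤ, -(h : ℤ) ≤ r ∧ r ≤ h ∧ (c * D + s * r = x ∨ c * D + s * r = -x) := by
    rcases hD with rfl | rfl <;> rcases hs with rfl | rfl
    · exact ⟨x - c * D, by linarith, by linarith, Or.inl (by ring)⟩
    · exact ⟨c * D - x, by linarith, by linarith, Or.inl (by ring)⟩
    · exact ⟨c * q - x, by linarith, by linarith, Or.inr (by ring)⟩
    · exact ⟨x - c * q, by linarith, by linarith, Or.inr (by ring)⟩
  obtain ⟨r, hr1, hr2, hr⟩ := key
  obtain ⟨l, hl⟩ := kap_surj h i r hr1 hr2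
  refine ⟨l, abs_aux hx ?_⟩
  rw [hl]
  rcases he with rfl | rfl <;> rcases hr with hr | hr <;> rw [hr] <;> simp

theorem sum_pairs (T : ℕ) (f : ℕ → ℤ) :
    ∑ j ∈ Finset.range (2 * T), f j
      = ∑ t ∈ Finset.range T, (f (2 * t) + f (2 * t + 1)) := by
  induction T with
  | zero => simp
  | succ T ih =>
    rw [show 2 * (T + 1) = 2 * T + 1 + 1 by ring, Finset.sum_range_succ, Finset.sum_range_succ,
      Finset.sum_range_succ, ih]
    ring

theorem sum_sign (T a : ℕ) :
    ∑ t ∈ Finset.range T, (if t < a then (1 : ℤ) else -1) = 2 * (min a T : ℕ) - T := by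
  induction T with
  | zero => simp
  | succ T ih =>
    rw [Finset.sum_range_succ, ih]
    split_ifs <;> push_cast <;> omega

theorem strip (h T : ℕ) (α c : ℤ) (hα : ∃ a : ℕ, a ≤ T ∧ (2 * a : ℤ) - T = -α)
    (D0 D1 : ℕ → Fin 3 → ℤ) (hD0 : ∀ t, ∑ i, D0 t i = 0) (hD1 : ∀ t, ∑ i, D1 t i = 0)
    (hD : ∀ t i, D0 t i + D1 t i = wt i) :
    ∃ S : Fin (2 * h + 1) → Fin 3 → Fin (2 * T) → ℤ,
      (∀ l i, ∑ j, S l i j = -(c * (α * wt i))) ∧ (∀ l j, ∑ i, S l i j = 0) ∧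
      (∀ t < T, ∀ i q x, (D0 t i = q ∨ D0 t i = -q ∨ D1 t i = q ∨ D1 t i = -q) →
        0 ≤ x → c * q - h ≤ x → x ≤ c * q + h → ∃ l i j, |S l i j| = x) := by
  obtain ⟨a, haT, ha⟩ := hα
  let ε : ℕ → ℤ := fun t => if t < a then 1 else -1
  have hε : ∀ t, ε t = 1 ∨ ε t = -1 := by
    intro t
    by_cases ht : t < a <;> simp [ε, ht]
  have hεs : ∑ t ∈ Finset.range T, ε t = -α := by
    rw [sum_sign, min_eq_left haT, ha]
  let F : ℕ → Fin 3 → ℕ → ℤ := fun l i j =>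
    ε (j / 2) * (if j % 2 = 0 then c * D0 (j / 2) i + 1 * kap h i ((l : ℕ) - (h : ℤ))
      else c * D1 (j / 2) i + (-1) * kap h i ((l : ℕ) - (h : ℤ)))
  have hF0 : ∀ l i t, F l i (2 * t) = ε t * (c * D0 t i + 1 * kap h i ((l : ℕ) - (h : ℤ))) := by
    intro l i t
    have e1 : 2 * t / 2 = t := by omega
    have e2 : 2 * t % 2 = 0 := by omega
    simp only [F, e1, e2, if_true]
  have hF1 : ∀ l i t, F l i (2 * t + 1)
      = ε t * (c * D1 t i + (-1) * kap h i ((l : ℕ) - (h : ℤ))) := by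
    intro l i t
    have e1 : (2 * t + 1) / 2 = t := by omega
    have e2 : (2 * t + 1) % 2 = 1 := by omega
    simp only [F, e1, e2, one_ne_zero, if_false]
  refine ⟨fun l i j => F l i j, ?_, ?_, ?_⟩
  · intro l i
    rw [Fin.sum_univ_eq_sum_range (fun j => F l i j), sum_pairs]
    have : ∀ t ∈ Finset.range T, F l i (2 * t) + F l i (2 * t + 1) = ε t * (c * wt i) := by
      intro t _
      rw [hF0, hF1, ← hD t i]
      ring
    rw [Finset.sum_congr rfl this, ← Finset.sum_mul, hεs]
    ring
  · intro l j
    have hk := kap_sum h ((l : ℕ) - (h : ℤ))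
    have h0 := hD0 ((j : ℕ) / 2)
    have h1 := hD1 ((j : ℕ) / 2)
    rw [Fin.sum_univ_three] at h0 h1 ⊢
    simp only [F]
    split_ifs
    · linear_combination ε ((j : ℕ) / 2) * (c * h0 + hk)
    · linear_combination ε ((j : ℕ) / 2) * (c * h1 - hk)
  · intro t ht i q x hq hx h1 h2
    have hq' : (D0 t i = q ∨ D0 t i = -q) ∨ (D1 t i = q ∨ D1 t i = -q) := by tauto
    rcases hq' with hq | hq
    · obtain ⟨l, hl⟩ := coarse h i (D0 t i) q x c 1 (ε t) (Or.inl rfl) (hε t) hq hx h1 h2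
      refine ⟨l, i, ⟨2 * t, by omega⟩, ?_⟩
      simp only [hF0]
      exact hl
    · obtain ⟨l, hl⟩ := coarse h i (D1 t i) q x c (-1) (ε t) (Or.inr rfl) (hε t) hq hx h1 h2
      refine ⟨l, i, ⟨2 * t + 1, by omega⟩, ?_⟩
      simp only [hF1]
      exact hl

theorem corner (h : ℕ) (α β c : ℤ) (C : Fin 3 → Fin 3 → ℤ)
    (hr : ∀ i, ∑ j, C i j = α * wt i) (hcol : ∀ j, ∑ i, C i j = β * wt j) :
    ∃ S : Fin (2 * h + 1) → Fin 3 → Fin 3 → ℤ,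
      (∀ l i, ∑ j, S l i j = c * (α * wt i)) ∧ (∀ l j, ∑ i, S l i j = c * (β * wt j)) ∧
      (∀ i j q x, (C i j = q ∨ C i j = -q) →
        0 ≤ x → c * q - h ≤ x → x ≤ c * q + h → ∃ l i j, |S l i j| = x) := by
  refine ⟨fun l i j => 1 * (c * C i j + 1 * kap h (i + j) ((l : ℕ) - (h : ℤ))), ?_, ?_, ?_⟩
  · intro l i
    rw [← hr i]
    have hk := kap_sum h ((l : ℕ) - (h : ℤ))
    simp only [Fin.sum_univ_three]
    have hi : i = 0 ∨ i = 1 ∨ i = 2 := by omega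
    rcases hi with rfl | rfl | rfl
    · simp only [show (0 : Fin 3) + 0 = 0 from rfl, show (0 : Fin 3) + 1 = 1 from rfl,
        show (0 : Fin 3) + 2 = 2 from rfl]
      linear_combination hk
    · simp only [show (1 : Fin 3) + 0 = 1 from rfl, show (1 : Fin 3) + 1 = 2 from rfl,
        show (1 : Fin 3) + 2 = 0 from rfl]
      linear_combination hk
    · simp only [show (2 : Fin 3) + 0 = 2 from rfl, show (2 : Fin 3) + 1 = 0 from rfl,
        show (2 : Fin 3) + 2 = 1 from rfl]
      linear_combination hk
  · intro l i
    rw [← hcol i]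
    have hk := kap_sum h ((l : ℕ) - (h : ℤ))
    simp only [Fin.sum_univ_three]
    have hi : i = 0 ∨ i = 1 ∨ i = 2 := by omega
    rcases hi with rfl | rfl | rfl
    · simp only [show (0 : Fin 3) + 0 = 0 from rfl, show (1 : Fin 3) + 0 = 1 from rfl,
        show (2 : Fin 3) + 0 = 2 from rfl]
      linear_combination hk
    · simp only [show (0 : Fin 3) + 1 = 1 from rfl, show (1 : Fin 3) + 1 = 2 from rfl,
        show (2 : Fin 3) + 1 = 0 from rfl]
      linear_combination hk
    · simp only [show (0 : Fin 3) + 2 = 2 from rfl, show (1 : Fin 3) + 2 = 0 from rfl,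
        show (2 : Fin 3) + 2 = 1 from rfl]
      linear_combination hk
  · intro i j q x hq hx h1 h2
    obtain ⟨l, hl⟩ := coarse h (i + j) (C i j) q x c 1 1 (Or.inl rfl) (Or.inl rfl) hq hx h1 h2
    exact ⟨l, i, j, hl⟩

/-- The set `S` can be covered by `N` runs of four consecutive numbers. -/
def Cov (N : ℕ) (S : ℕ → Prop) : Prop :=
  ∃ g : ℕ → ℕ, ∀ x, S x → ∃ i < N, ∃ e < 4, x = g i + e

theorem cov_interval (N a : ℕ) : Cov N (fun x => a ≤ x ∧ x < a + 4 * N) := by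
  refine ⟨fun i => a + 4 * i, ?_⟩
  rintro x ⟨h1, h2⟩
  exact ⟨(x - a) / 4, by omega, (x - a) % 4, by omega, by dsimp only; omega⟩

theorem Cov.union {N N' : ℕ} {S S' : ℕ → Prop} (h : Cov N S) (h' : Cov N' S') :
    Cov (N + N') (fun x => S x ∨ S' x) := by
  obtain ⟨g, hg⟩ := h
  obtain ⟨g', hg'⟩ := h'
  refine ⟨fun i => if i < N then g i else g' (i - N), ?_⟩
  rintro x (hx | hx)
  · obtain ⟨i, hi, e, he, hxe⟩ := hg x hx
    exact ⟨i, by omega, e, he, by simp only [hi, if_true, hxe]⟩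
  · obtain ⟨i, hi, e, he, hxe⟩ := hg' x hx
    refine ⟨N + i, by omega, e, he, ?_⟩
    have h1 : ¬ (N + i < N) := by omega
    have h2 : N + i - N = i := by omega
    simp only [h1, if_false, h2, hxe]

theorem cov_list (h c : ℕ) (hc : h ≤ c) (L : List (ℕ × ℕ)) (hL : ∀ y ∈ L, 1 ≤ y.1) :
    Cov (c * (L.map Prod.snd).sum)
      (fun x => ∃ y ∈ L, c * y.1 ≤ x + h ∧ x + h < c * y.1 + 4 * (c * y.2)) := by
  induction L with
  | nil => exact ⟨fun _ => 0, by simp⟩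
  | cons y L ih =>
    have h1 := cov_interval (c * y.2) (c * y.1 - h)
    obtain ⟨g, hg⟩ := h1.union (ih (fun z hz => hL z (List.mem_cons_of_mem _ hz)))
    have hy : h ≤ c * y.1 := le_trans hc (Nat.le_mul_of_pos_right _ (hL y List.mem_cons_self))
    refine ⟨g, ?_⟩
    rintro x ⟨z, hz, hz1, hz2⟩
    have : c * ((y :: L).map Prod.snd).sum = c * y.2 + c * (L.map Prod.snd).sum := by
      simp [mul_add]
    rw [this]
    apply hg
    rcases List.mem_cons.1 hz with rfl | hz
    · left
      omega
    · exact Or.inr ⟨z, hz, hz1, hz2⟩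

theorem isIHS_of_surj (m n c : ℕ) (A : Fin c → Matrix (Fin m) (Fin n) ℤ)
    (hs : ∀ x : ℕ, 1 ≤ x → x ≤ m * n * c → ∃ l i j, |A l i j| = (x : ℤ))
    (hr : ∀ l i, ∑ j, A l i j = 0) (hcol : ∀ l j, ∑ i, A l i j = 0) : IsIHS m n c A := by
  let f : Fin c × Fin m × Fin n → ℤ := fun p => |A p.1 p.2.1 p.2.2|
  have hsub : Finset.Icc (1 : ℤ) ((m * n * c : ℕ) : ℤ) ⊆ Finset.univ.image f := by
    intro x hx
    rw [Finset.mem_Icc] at hx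
    obtain ⟨l, i, j, hl⟩ := hs x.toNat (by omega) (by omega)
    refine Finset.mem_image.2 ⟨(l, i, j), Finset.mem_univ _, ?_⟩
    simp only [f, hl]
    omega
  have hcard : (Finset.univ : Finset (Fin c × Fin m × Fin n)).card = m * n * c := by
    simp
    ring
  have hIcc : (Finset.Icc (1 : ℤ) ((m * n * c : ℕ) : ℤ)).card = m * n * c := by
    rw [Int.card_Icc]
    omega
  have hle : (Finset.univ.image f).card ≤ m * n * c := by
    rw [← hcard]
    exact Finset.card_image_le
  have heq : Finset.Icc (1 : ℤ) ((m * n * c : ℕ) : ℤ) = Finset.univ.image f :=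
    Finset.eq_of_subset_of_card_le hsub (by rw [hIcc]; exact hle)
  refine ⟨?_, ?_, hr, hcol⟩
  · have : Set.InjOn f (Finset.univ : Finset (Fin c × Fin m × Fin n)) := by
      apply Finset.injOn_of_card_image_eq
      rw [← heq, hIcc, hcard]
    intro p p' hp
    exact this (by simp) (by simp) hp
  · intro x
    have : x ∈ Finset.Icc (1 : ℤ) ((m * n * c : ℕ) : ℤ) ↔ x ∈ Finset.univ.image f := by rw [heq]
    rw [Finset.mem_Icc] at this
    push_cast at this
    rw [this, Finset.mem_image]
    constructor
    · rintro ⟨⟨l, i, j⟩, _, hp⟩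
      exact ⟨l, i, j, hp⟩
    · rintro ⟨l, i, j, hp⟩
      exact ⟨(l, i, j), Finset.mem_univ _, hp⟩

theorem assemble (h c T1 T2 : ℕ) (hc : c = 2 * h + 1)
    (D0 D1 : ℕ → Fin 3 → ℤ) (hD0 : ∀ t, ∑ i, D0 t i = 0) (hD1 : ∀ t, ∑ i, D1 t i = 0)
    (hD : ∀ t i, D0 t i + D1 t i = wt i) (C : Fin 3 → Fin 3 → ℤ) (α β : ℤ)
    (hCr : ∀ i, ∑ j, C i j = α * wt i) (hCc : ∀ j, ∑ i, C i j = β * wt j)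
    (hα : ∃ a : ℕ, a ≤ T1 ∧ (2 * a : ℤ) - T1 = -α)
    (hβ : ∃ a : ℕ, a ≤ T2 ∧ (2 * a : ℤ) - T2 = -β)
    (hF : ShiftW (2 * T2) (2 * T1) (T1 * T2 - 2))
    (d M t0 : ℕ) (hd : 1 ≤ d) (L : List (ℕ × ℕ)) (hL : ∀ y ∈ L, 1 ≤ y.1)
    (hcov : ∀ q : ℕ, d ≤ q → q ≤ M →
      (∃ t < T1 + T2, ∃ i, D0 t i = q ∨ D0 t i = -q ∨ D1 t i = q ∨ D1 t i = -q) ∨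
      (∃ i j, C i j = q ∨ C i j = -q) ∨
      (∃ y ∈ L, y.1 ≤ q ∧ q < y.1 + 4 * y.2))
    (hcount : M + 1 = d + 6 * (T1 + T2) + 9 + 4 * (L.map Prod.snd).sum)
    (ht0 : 4 * t0 + h + 1 = c * d)
    (hbd : d + 4 * (L.map Prod.snd).sum + 8 ≤ 4 * (T1 * T2)) :
    ∃ A : Fin c → Matrix (Fin (3 + 2 * T2)) (Fin (3 + 2 * T1)) ℤ,
      IsIHS (3 + 2 * T2) (3 + 2 * T1) c A := by
  subst hc
  obtain ⟨N, hN⟩ : ∃ N, T1 * T2 = N + 2 := ⟨T1 * T2 - 2, by omega⟩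
  have hN' : T1 * T2 - 2 = N := by omega
  rw [hN'] at hF
  set G := (L.map Prod.snd).sum with hG
  obtain ⟨Z, hZ⟩ : ∃ Z, N = G + Z := ⟨N - G, by omega⟩
  have hdZ : d ≤ 4 * Z := by omega
  set c := 2 * h + 1 with hc
  have hcd : c * d ≤ c * (4 * Z) := Nat.mul_le_mul_left c hdZ
  have hcZ : c * (4 * Z) = 4 * (c * Z) := by ring
  obtain ⟨tt, htt⟩ : ∃ tt, c * Z = t0 + tt := ⟨c * Z - t0, by omega⟩
  -- the total number of entries
  have hmn : (3 + 2 * T2) * (3 + 2 * T1) * c = c * (M + 1) + 4 * tt + 8 * c - h - 1 := by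
    have e1 : (3 + 2 * T2) * (3 + 2 * T1) = 9 + 6 * (T1 + T2) + 4 * (T1 * T2) := by ring
    have e2 : (9 + 6 * (T1 + T2) + 4 * (T1 * T2)) + d = (M + 1) + 4 * Z + 8 := by omega
    have e3 : (9 + 6 * (T1 + T2) + 4 * (T1 * T2)) * c + c * d
        = c * (M + 1) + 4 * (c * Z) + 8 * c := by
      rw [mul_comm _ c, ← mul_add, e2]
      ring
    rw [e1]
    omega
  have hcM : c ≤ c * (M + 1) := Nat.le_mul_of_pos_right _ (by omega)
  -- the covering by runs of length four
  have hlow := cov_interval t0 1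
  have htop := cov_interval tt (c * (M + 1) - h)
  have hmid := cov_list h c (by omega) L hL
  obtain ⟨g, hg⟩ := (hlow.union htop).union hmid
  have hNtot : t0 + tt + c * G = c * N := by
    rw [hZ, mul_add]
    omega
  rw [← hG, hNtot] at hg
  obtain ⟨S, hSr, hSc, hS⟩ := strip h T1 α c hα D0 D1 hD0 hD1 hD
  obtain ⟨R, hRr, hRc, hR⟩ := strip h T2 β c hβ (fun t => D0 (T1 + t)) (fun t => D1 (T1 + t))
    (fun t => hD0 _) (fun t => hD1 _) (fun t => hD _)
  obtain ⟨E, hEr, hEc, hE⟩ := corner h α β c C hCr hCc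
  have hFl := fun l : Fin c => hF (fun k => g ((l : ℕ) * N + k))
    (c * (M + 1) + 4 * tt - h + 8 * (l : ℕ))
  choose Q hQr hQc hQ hQw using hFl
  refine ⟨fun l => Matrix.of (Fin.append (fun i => Fin.append (E l i) (S l i))
    (fun i => Fin.append (fun j => R l j i) (Q l i))), ?_⟩
  apply isIHS_of_surj
  · intro x hx1 hx2
    rw [hmn] at hx2
    -- helper embeddings
    have inE : (∃ l i j, |E l i j| = (x : ℤ)) → ∃ l i j, |(Matrix.of (Fin.append
        (fun i => Fin.append (E l i) (S l i)) (fun i => Fin.append (fun j => R l j i) (Q l i)))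
        : Matrix (Fin (3 + 2 * T2)) (Fin (3 + 2 * T1)) ℤ) i j| = (x : ℤ) := by
      rintro ⟨l, i, j, hl⟩
      exact ⟨l, Fin.castAdd _ i, Fin.castAdd _ j, by simpa using hl⟩
    have inS : (∃ l i j, |S l i j| = (x : ℤ)) → ∃ l i j, |(Matrix.of (Fin.append
        (fun i => Fin.append (E l i) (S l i)) (fun i => Fin.append (fun j => R l j i) (Q l i)))
        : Matrix (Fin (3 + 2 * T2)) (Fin (3 + 2 * T1)) ℤ) i j| = (x : ℤ) := by
      rintro ⟨l, i, j, hl⟩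
      exact ⟨l, Fin.castAdd _ i, Fin.natAdd _ j, by simpa using hl⟩
    have inR : (∃ l i j, |R l i j| = (x : ℤ)) → ∃ l i j, |(Matrix.of (Fin.append
        (fun i => Fin.append (E l i) (S l i)) (fun i => Fin.append (fun j => R l j i) (Q l i)))
        : Matrix (Fin (3 + 2 * T2)) (Fin (3 + 2 * T1)) ℤ) i j| = (x : ℤ) := by
      rintro ⟨l, i, j, hl⟩
      exact ⟨l, Fin.natAdd _ j, Fin.castAdd _ i, by simpa using hl⟩
    have inQ : (∃ l i j, |Q l i j| = (x : ℤ)) → ∃ l i j, |(Matrix.of (Fin.append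
        (fun i => Fin.append (E l i) (S l i)) (fun i => Fin.append (fun j => R l j i) (Q l i)))
        : Matrix (Fin (3 + 2 * T2)) (Fin (3 + 2 * T1)) ℤ) i j| = (x : ℤ) := by
      rintro ⟨l, i, j, hl⟩
      exact ⟨l, Fin.natAdd _ i, Fin.natAdd _ j, by simpa using hl⟩
    have inG : (∃ i < c * N, ∃ e < 4, x = g i + e) → ∃ l i j, |Q l i j| = (x : ℤ) := by
      rintro ⟨i, hi, e, he, hxe⟩
      have hNpos : 0 < N := by
        rcases Nat.eq_zero_or_pos N with h0 | h0
        · rw [h0] at hi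
          omega
        · exact h0
      obtain ⟨a, b, hab⟩ := hQ ⟨i / N, by
        rw [Nat.div_lt_iff_lt_mul hNpos]
        exact hi⟩ (i % N) (Nat.mod_lt _ hNpos) e he
      refine ⟨_, a, b, hab.trans ?_⟩
      dsimp only
      rw [Nat.div_add_mod', hxe]
      push_cast
      rfl
    -- case split on the position of `x`
    by_cases hw : c * (M + 1) + 4 * tt - h ≤ x
    · apply inQ
      set W := c * (M + 1) + 4 * tt - h with hW
      obtain ⟨a, b, hab⟩ := hQw ⟨(x - W) / 8, by omega⟩ ((x - W) % 8) (Nat.mod_lt _ (by norm_num))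
      refine ⟨_, a, b, hab.trans ?_⟩
      dsimp only
      have : W + 8 * ((x - W) / 8) + (x - W) % 8 = x := by omega
      exact_mod_cast this
    · by_cases hd1 : x + h < c * d
      · apply inQ
        apply inG
        exact hg x (Or.inl (Or.inl (by omega)))
      · by_cases hM1 : c * (M + 1) ≤ x + h
        · apply inQ
          apply inG
          exact hg x (Or.inl (Or.inr (by omega)))
        · have hcpos : 0 < c := by omega
          set q := (x + h) / c with hq
          have hq1 : c * q ≤ x + h := Nat.mul_div_le _ _
          have hq2 : x + h < c * q + c := by
            have := Nat.lt_mul_div_succ (x + h) hcpos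
            rw [mul_add, mul_one] at this
            exact this
          have hdq : d ≤ q := by
            rw [hq, Nat.le_div_iff_mul_le hcpos, mul_comm]
            omega
          have hqM : q ≤ M := by
            have : q < M + 1 := by
              rw [hq, Nat.div_lt_iff_lt_mul hcpos, mul_comm]
              omega
            omega
          have z1 : (c : ℤ) * (q : ℤ) - h ≤ x := by
            have : ((c * q : ℕ) : ℤ) ≤ ((x + h : ℕ) : ℤ) := by exact_mod_cast hq1
            push_cast at this
            linarith
          have z2 : (x : ℤ) ≤ (c : ℤ) * (q : ℤ) + h := by
            have : x ≤ c * q + h := by omega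
            exact_mod_cast this
          rcases hcov q hdq hqM with ⟨t, ht, i, hti⟩ | ⟨i, j, hij⟩ | ⟨y, hy, hy1, hy2⟩
          · by_cases htT : t < T1
            · exact inS (hS t htT i q x hti (by omega) z1 z2)
            · have : T1 + (t - T1) = t := by omega
              exact inR (hR (t - T1) (by omega) i q x (by simpa only [this] using hti)
                (by omega) z1 z2)
          · exact inE (hE i j q x hij (by omega) z1 z2)
          · apply inQ
            apply inG
            refine hg x (Or.inr ⟨y, hy, (Nat.mul_le_mul_left c hy1).trans hq1, ?_⟩)
            have : c * (q + 1) ≤ c * (y.1 + 4 * y.2) := Nat.mul_le_mul_left c hy2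
            have e1 : c * (y.1 + 4 * y.2) = c * y.1 + 4 * (c * y.2) := by ring
            have e2 : c * (q + 1) = c * q + c := by ring
            omega
  · intro l i
    rw [Fin.sum_univ_add]
    refine Fin.addCases (fun i => ?_) (fun i => ?_) i
    · simp [hEr, hSr]
    · simp [hRc, hQr]
  · intro l j
    rw [Fin.sum_univ_add]
    refine Fin.addCases (fun i => ?_) (fun i => ?_) j
    · simp [hEc, hRr]
    · simp [hSc, hQc]

/-- First columns of the dominos. -/
def dom0 (K U V X P B : ℤ) (t : ℕ) : Fin 3 → ℤ :=
  if (t : ℤ) < K then ![-(U + 2 * t), -(V + 2 * t), X + 4 * t]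
  else ![P + 2 * K - 1 - 2 * (t - K), -(B + 2 * (t - K)), X + 4 * (t - K) + 1]

/-- Second columns of the dominos. -/
def dom1 (K U V X P B : ℤ) (t : ℕ) : Fin 3 → ℤ :=
  if (t : ℤ) < K then ![U + 2 * t + 1, V + 2 * t + 1, -(X + 4 * t + 2)]
  else ![-(P + 2 * K - 1 - 2 * (t - K) - 1), B + 2 * (t - K) + 1, -(X + 4 * (t - K) + 3)]

theorem dom_cov (K U V X P B q : ℕ)
    (hq : (P ≤ q ∧ q < P + 2 * K) ∨ (U ≤ q ∧ q < U + 2 * K) ∨ (V ≤ q ∧ q < V + 2 * K) ∨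
      (X ≤ q ∧ q < X + 4 * K) ∨ (B ≤ q ∧ q < B + 2 * K)) :
    ∃ t < 2 * K, ∃ i, dom0 K U V X P B t i = q ∨ dom0 K U V X P B t i = -q ∨
      dom1 K U V X P B t i = q ∨ dom1 K U V X P B t i = -q := by
  rcases hq with hq | hq | hq | hq | hq
  · refine ⟨K + (P + 2 * K - 1 - q) / 2, by omega, 0, ?_⟩
    have : ¬ (((K + (P + 2 * K - 1 - q) / 2 : ℕ) : ℤ) < K) := by omega
    simp only [dom0, dom1, if_neg this, Matrix.cons_val]
    omega
  · refine ⟨(q - U) / 2, by omega, 0, ?_⟩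
    have : (((q - U) / 2 : ℕ) : ℤ) < K := by omega
    simp only [dom0, dom1, if_pos this, Matrix.cons_val]
    omega
  · refine ⟨(q - V) / 2, by omega, 1, ?_⟩
    have : (((q - V) / 2 : ℕ) : ℤ) < K := by omega
    simp only [dom0, dom1, if_pos this, Matrix.cons_val]
    omega
  · by_cases h2 : (q - X) % 2 = 0
    · refine ⟨(q - X) / 4, by omega, 2, ?_⟩
      have : (((q - X) / 4 : ℕ) : ℤ) < K := by omega
      simp only [dom0, dom1, if_pos this, Matrix.cons_val]
      omega
    · refine ⟨K + (q - X) / 4, by omega, 2, ?_⟩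
      have : ¬ (((K + (q - X) / 4 : ℕ) : ℤ) < K) := by omega
      simp only [dom0, dom1, if_neg this, Matrix.cons_val]
      omega
  · refine ⟨K + (q - B) / 2, by omega, 1, ?_⟩
    have : ¬ (((K + (q - B) / 2 : ℕ) : ℤ) < K) := by omega
    simp only [dom0, dom1, if_neg this, Matrix.cons_val]
    omega

theorem sign_exists (T : ℕ) (α : ℤ) (h1 : -(T : ℤ) ≤ α) (h2 : α ≤ T) (h3 : (α + T) % 2 = 0) :
    ∃ a : ℕ, a ≤ T ∧ (2 * a : ℤ) - T = -α :=
  ⟨((T - α) / 2).toNat, by omega, by omega⟩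

theorem low_exists (h c d : ℕ) (hc : c = 2 * h + 1) (hd : 1 ≤ d)
    (hcd : (c % 8 = 3 ∧ d % 4 = 2) ∨ (c % 8 = 7 ∧ d % 4 = 0)) :
    ∃ t0, 4 * t0 + h + 1 = c * d := by
  rcases hcd with ⟨h1, h2⟩ | ⟨h1, h2⟩
  · obtain ⟨u, hu⟩ : ∃ u, c = 8 * u + 3 := ⟨c / 8, by omega⟩
    obtain ⟨v, hv⟩ : ∃ v, d = 4 * v + 2 := ⟨d / 4, by omega⟩
    have hh : h = 4 * u + 1 := by omega
    refine ⟨8 * u * v + 3 * u + 3 * v + 1, ?_⟩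
    rw [hh, hu, hv]
    ring
  · obtain ⟨u, hu⟩ : ∃ u, c = 8 * u + 7 := ⟨c / 8, by omega⟩
    obtain ⟨v, hv⟩ : ∃ v, d = 4 * (v + 1) := ⟨d / 4 - 1, by omega⟩
    have hh : h = 4 * u + 3 := by omega
    refine ⟨8 * u * v + 7 * u + 7 * v + 6, ?_⟩
    rw [hh, hu, hv]
    ring

theorem chains (h c T1 T2 K : ℕ) (hc : c = 2 * h + 1) (hT : T1 + T2 = 2 * K)
    (h1 : 2 ≤ T1) (h2 : 2 ≤ T2)
    (hF : ShiftW (2 * T2) (2 * T1) (T1 * T2 - 2))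
    (P U V X B d M : ℕ) (L : List (ℕ × ℕ))
    (a11 a12 a13 a21 a22 a23 a31 a32 a33 α β : ℤ)
    (hX : X = U + V) (hB : B = X + P + 2 * K)
    (hα : -2 ≤ α ∧ α ≤ 2 ∧ (α + T1) % 2 = 0) (hβ : -2 ≤ β ∧ β ≤ 2 ∧ (β + T2) % 2 = 0)
    (hr1 : a11 + a12 + a13 = α) (hr2 : a21 + a22 + a23 = α) (hr3 : a31 + a32 + a33 = -2 * α)
    (hk1 : a11 + a21 + a31 = β) (hk2 : a12 + a22 + a32 = β) (hk3 : a13 + a23 + a33 = -2 * β)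
    (hd : 1 ≤ d) (hcd : (c % 8 = 3 ∧ d % 4 = 2) ∨ (c % 8 = 7 ∧ d % 4 = 0))
    (hL : ∀ y ∈ L, 1 ≤ y.1)
    (hcov : ∀ q : ℕ, d ≤ q → q ≤ M →
      (P ≤ q ∧ q < P + 2 * K) ∨ (U ≤ q ∧ q < U + 2 * K) ∨ (V ≤ q ∧ q < V + 2 * K) ∨
      (X ≤ q ∧ q < X + 4 * K) ∨ (B ≤ q ∧ q < B + 2 * K) ∨
      (a11 = q ∨ a11 = -q) ∨ (a12 = q ∨ a12 = -q) ∨ (a13 = q ∨ a13 = -q) ∨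
      (a21 = q ∨ a21 = -q) ∨ (a22 = q ∨ a22 = -q) ∨ (a23 = q ∨ a23 = -q) ∨
      (a31 = q ∨ a31 = -q) ∨ (a32 = q ∨ a32 = -q) ∨ (a33 = q ∨ a33 = -q) ∨
      (∃ y ∈ L, y.1 ≤ q ∧ q < y.1 + 4 * y.2))
    (hcount : M + 1 = d + 12 * K + 9 + 4 * (L.map Prod.snd).sum)
    (hbd : d + 4 * (L.map Prod.snd).sum + 8 ≤ 4 * (T1 * T2)) :
    ∃ A : Fin c → Matrix (Fin (3 + 2 * T2)) (Fin (3 + 2 * T1)) ℤ,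
      IsIHS (3 + 2 * T2) (3 + 2 * T1) c A := by
  obtain ⟨t0, ht0⟩ := low_exists h c d hc hd hcd
  have cov1 := dom_cov K U V X P B
  refine assemble h c T1 T2 hc (dom0 K U V X P B) (dom1 K U V X P B) ?_ ?_ ?_
    ![![a11, a12, a13], ![a21, a22, a23], ![a31, a32, a33]] α β ?_ ?_
    (sign_exists T1 α (by omega) (by omega) hα.2.2)
    (sign_exists T2 β (by omega) (by omega) hβ.2.2) hF d M t0 hd L hL ?_ (by omega) ht0 hbd
  · intro t
    simp only [dom0]
    split_ifs <;> simp only [Fin.sum_univ_three, Matrix.cons_val] <;> subst hX hB <;>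
      push_cast <;> ring
  · intro t
    simp only [dom1]
    split_ifs <;> simp only [Fin.sum_univ_three, Matrix.cons_val] <;> subst hX hB <;>
      push_cast <;> ring
  · intro t i
    have hi : i = 0 ∨ i = 1 ∨ i = 2 := by omega
    have w0 : wt 0 = 1 := rfl
    have w1 : wt 1 = 1 := rfl
    have w2 : wt 2 = -2 := rfl
    simp only [dom0, dom1]
    rcases hi with rfl | rfl | rfl <;> split_ifs <;> simp only [Matrix.cons_val, w0, w1, w2] <;> ring
  · intro i
    have hi : i = 0 ∨ i = 1 ∨ i = 2 := by omega
    have w0 : wt 0 = 1 := rfl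
    have w1 : wt 1 = 1 := rfl
    have w2 : wt 2 = -2 := rfl
    rcases hi with rfl | rfl | rfl <;>
      simp only [Fin.sum_univ_three, Matrix.cons_val, w0, w1, w2] <;> linarith
  · intro i
    have hi : i = 0 ∨ i = 1 ∨ i = 2 := by omega
    have w0 : wt 0 = 1 := rfl
    have w1 : wt 1 = 1 := rfl
    have w2 : wt 2 = -2 := rfl
    rcases hi with rfl | rfl | rfl <;>
      simp only [Fin.sum_univ_three, Matrix.cons_val, w0, w1, w2] <;> linarith
  · intro q hq1 hq2
    rw [hT]
    rcases hcov q hq1 hq2 with H | H | H | H | H | H | H | H | H | H | H | H | H | H | H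
    · exact Or.inl (cov1 q (Or.inl H))
    · exact Or.inl (cov1 q (Or.inr (Or.inl H)))
    · exact Or.inl (cov1 q (Or.inr (Or.inr (Or.inl H))))
    · exact Or.inl (cov1 q (Or.inr (Or.inr (Or.inr (Or.inl H)))))
    · exact Or.inl (cov1 q (Or.inr (Or.inr (Or.inr (Or.inr H)))))
    · exact Or.inr (Or.inl ⟨0, 0, H⟩)
    · exact Or.inr (Or.inl ⟨0, 1, H⟩)
    · exact Or.inr (Or.inl ⟨0, 2, H⟩)
    · exact Or.inr (Or.inl ⟨1, 0, H⟩)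
    · exact Or.inr (Or.inl ⟨1, 1, H⟩)
    · exact Or.inr (Or.inl ⟨1, 2, H⟩)
    · exact Or.inr (Or.inl ⟨2, 0, H⟩)
    · exact Or.inr (Or.inl ⟨2, 1, H⟩)
    · exact Or.inr (Or.inl ⟨2, 2, H⟩)
    · exact Or.inr (Or.inr H)

theorem fam1 (h c T1 T2 K k : ℕ) (hc : c = 2 * h + 1) (hT : T1 + T2 = 2 * K)
    (h1 : 2 ≤ T1) (h2 : 2 ≤ T2) (hF : ShiftW (2 * T2) (2 * T1) (T1 * T2 - 2))
    (hK : K = 2 * k + 3) (hT1 : T1 % 2 = 0) (hT2 : T2 % 2 = 0)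
    (hb : 16 * K ≤ 4 * (T1 * T2) + 16) (h8 : c % 8 = 3) :
    ∃ A : Fin c → Matrix (Fin (3 + 2 * T2)) (Fin (3 + 2 * T1)) ℤ,
      IsIHS (3 + 2 * T2) (3 + 2 * T1) c A := by
  refine chains h c T1 T2 K hc hT h1 h2 hF (2 * K) (4 * K) (6 * K) (10 * K) (14 * K)
    (2 * K) (16 * K + 6) [(8 * K + 6, k), (16 * K, 1)]
    (16 * K + 6) (-(8 * K + 1)) (-(8 * K + 5)) (-(8 * K + 2)) (-(8 * K + 3)) (16 * K + 5) (-(8 * K + 4)) (16 * K + 4) (-(8 * K))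
    (0) (0) (by ring) (by ring) (by omega) (by omega) (by ring) (by ring) (by ring)
    (by ring) (by ring) (by ring) (by omega) (Or.inl ⟨h8, by omega⟩) ?_ ?_ ?_ ?_
  · simp only [List.forall_mem_cons, List.not_mem_nil, false_imp_iff, implies_true, and_true]
    omega
  · intro q hq1 hq2
    simp only [List.mem_cons, List.not_mem_nil, or_false, exists_eq_or_imp, exists_eq_left]
    omega
  · simp only [List.map_cons, List.map_nil, List.sum_cons, List.sum_nil]
    omega
  · simp only [List.map_cons, List.map_nil, List.sum_cons, List.sum_nil]
    omega

theorem fam2 (h c T1 T2 K k : ℕ) (hc : c = 2 * h + 1) (hT : T1 + T2 = 2 * K)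
    (h1 : 2 ≤ T1) (h2 : 2 ≤ T2) (hF : ShiftW (2 * T2) (2 * T1) (T1 * T2 - 2))
    (hK : K = 2 * k + 3) (hT1 : T1 % 2 = 1) (hT2 : T2 % 2 = 1)
    (hb : 24 * K ≤ 4 * (T1 * T2) + 36) (h8 : c % 8 = 3) :
    ∃ A : Fin c → Matrix (Fin (3 + 2 * T2)) (Fin (3 + 2 * T1)) ℤ,
      IsIHS (3 + 2 * T2) (3 + 2 * T1) c A := by
  refine chains h c T1 T2 K hc hT h1 h2 hF (2 * K) (4 * K) (6 * K) (10 * K) (14 * K)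
    (2 * K) (16 * K + 6) [(8 * K + 6, k), (16 * K, 1)]
    (-(8 * K + 5)) (16 * K + 5) (-(8 * K + 1)) (16 * K + 4) (-(8 * K + 2)) (-(8 * K + 3)) (-(8 * K)) (-(8 * K + 4)) (16 * K + 6)
    (-1) (-1) (by ring) (by ring) (by omega) (by omega) (by ring) (by ring) (by ring)
    (by ring) (by ring) (by ring) (by omega) (Or.inl ⟨h8, by omega⟩) ?_ ?_ ?_ ?_
  · simp only [List.forall_mem_cons, List.not_mem_nil, false_imp_iff, implies_true, and_true]
    omega
  · intro q hq1 hq2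
    simp only [List.mem_cons, List.not_mem_nil, or_false, exists_eq_or_imp, exists_eq_left]
    omega
  · simp only [List.map_cons, List.map_nil, List.sum_cons, List.sum_nil]
    omega
  · simp only [List.map_cons, List.map_nil, List.sum_cons, List.sum_nil]
    omega

theorem fam3 (h c T1 T2 K k : ℕ) (hc : c = 2 * h + 1) (hT : T1 + T2 = 2 * K)
    (h1 : 2 ≤ T1) (h2 : 2 ≤ T2) (hF : ShiftW (2 * T2) (2 * T1) (T1 * T2 - 2))
    (hK : K = 2 * k + 3) (hT1 : T1 % 2 = 1) (hT2 : T2 % 2 = 1)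
    (hb : 24 * K ≤ 4 * (T1 * T2) + 36) (h8 : c % 8 = 7) :
    ∃ A : Fin c → Matrix (Fin (3 + 2 * T2)) (Fin (3 + 2 * T1)) ℤ,
      IsIHS (3 + 2 * T2) (3 + 2 * T1) c A := by
  refine chains h c T1 T2 K hc hT h1 h2 hF (2 * K) (4 * K + 4) (6 * K + 4) (10 * K + 8) (14 * K + 8)
    (4) (16 * K + 24) [(6, k), (4 * K, 1), (8 * K + 5, 1), (8 * K + 14, k), (16 * K + 8, 4)]
    (16 * K + 24) (-(8 * K + 13)) (-(8 * K + 10)) (-(8 * K + 12)) (8 * K + 9) (4) (-(8 * K + 11)) (5) (8 * K + 4)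
    (1) (1) (by ring) (by ring) (by omega) (by omega) (by ring) (by ring) (by ring)
    (by ring) (by ring) (by ring) (by omega) (Or.inr ⟨h8, by omega⟩) ?_ ?_ ?_ ?_
  · simp only [List.forall_mem_cons, List.not_mem_nil, false_imp_iff, implies_true, and_true]
    omega
  · intro q hq1 hq2
    simp only [List.mem_cons, List.not_mem_nil, or_false, exists_eq_or_imp, exists_eq_left]
    omega
  · simp only [List.map_cons, List.map_nil, List.sum_cons, List.sum_nil]
    omega
  · simp only [List.map_cons, List.map_nil, List.sum_cons, List.sum_nil]
    omega

theorem fam4 (h c T1 T2 K k : ℕ) (hc : c = 2 * h + 1) (hT : T1 + T2 = 2 * K)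
    (h1 : 2 ≤ T1) (h2 : 2 ≤ T2) (hF : ShiftW (2 * T2) (2 * T1) (T1 * T2 - 2))
    (hK : K = 2 * k + 3) (hT1 : T1 % 2 = 0) (hT2 : T2 % 2 = 0)
    (hb : 16 * K ≤ 4 * (T1 * T2) + 16) (h8 : c % 8 = 7) :
    ∃ A : Fin c → Matrix (Fin (3 + 2 * T2)) (Fin (3 + 2 * T1)) ℤ,
      IsIHS (3 + 2 * T2) (3 + 2 * T1) c A := by
  refine chains h c T1 T2 K hc hT h1 h2 hF (2 * K) (4 * K + 1) (6 * K + 8) (10 * K + 9) (14 * K + 9)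
    (4) (16 * K + 8) [(6, k), (6 * K + 2, 1), (8 * K + 8, k), (10 * K + 4, 1)]
    (10 * K + 8) (-4) (-(10 * K + 2)) (-(4 * K)) (-(6 * K + 1)) (10 * K + 3) (-(6 * K + 6)) (6 * K + 7) (-5)
    (2) (2) (by ring) (by ring) (by omega) (by omega) (by ring) (by ring) (by ring)
    (by ring) (by ring) (by ring) (by omega) (Or.inr ⟨h8, by omega⟩) ?_ ?_ ?_ ?_
  · simp only [List.forall_mem_cons, List.not_mem_nil, false_imp_iff, implies_true, and_true]
    omega
  · intro q hq1 hq2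
    simp only [List.mem_cons, List.not_mem_nil, or_false, exists_eq_or_imp, exists_eq_left]
    omega
  · simp only [List.map_cons, List.map_nil, List.sum_cons, List.sum_nil]
    omega
  · simp only [List.map_cons, List.map_nil, List.sum_cons, List.sum_nil]
    omega

theorem fam5 (h c T1 T2 K k : ℕ) (hc : c = 2 * h + 1) (hT : T1 + T2 = 2 * K)
    (h1 : 2 ≤ T1) (h2 : 2 ≤ T2) (hF : ShiftW (2 * T2) (2 * T1) (T1 * T2 - 2))
    (hK : K = 2 * k + 4) (hT1 : T1 % 2 = 1) (hT2 : T2 % 2 = 1)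
    (hb : 24 * K ≤ 4 * (T1 * T2) + 36) (h8 : c % 8 = 7) :
    ∃ A : Fin c → Matrix (Fin (3 + 2 * T2)) (Fin (3 + 2 * T1)) ℤ,
      IsIHS (3 + 2 * T2) (3 + 2 * T1) c A := by
  refine chains h c T1 T2 K hc hT h1 h2 hF (2 * K) (4 * K) (6 * K) (10 * K) (14 * K)
    (2 * K) (24 * K + 4) [(8 * K + 4, k + 1), (16 * K + 3, 2 * K)]
    (24 * K + 4) (-(16 * K + 2)) (-(8 * K + 1)) (-(16 * K)) (24 * K + 3) (-(8 * K + 2)) (-(8 * K + 3)) (-(8 * K)) (16 * K + 1)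
    (1) (1) (by ring) (by ring) (by omega) (by omega) (by ring) (by ring) (by ring)
    (by ring) (by ring) (by ring) (by omega) (Or.inr ⟨h8, by omega⟩) ?_ ?_ ?_ ?_
  · simp only [List.forall_mem_cons, List.not_mem_nil, false_imp_iff, implies_true, and_true]
    omega
  · intro q hq1 hq2
    simp only [List.mem_cons, List.not_mem_nil, or_false, exists_eq_or_imp, exists_eq_left]
    omega
  · simp only [List.map_cons, List.map_nil, List.sum_cons, List.sum_nil]
    omega
  · simp only [List.map_cons, List.map_nil, List.sum_cons, List.sum_nil]
    omega

theorem fam6 (h c T1 T2 K k : ℕ) (hc : c = 2 * h + 1) (hT : T1 + T2 = 2 * K)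
    (h1 : 2 ≤ T1) (h2 : 2 ≤ T2) (hF : ShiftW (2 * T2) (2 * T1) (T1 * T2 - 2))
    (hK : K = 2 * k + 4) (hT1 : T1 % 2 = 1) (hT2 : T2 % 2 = 1)
    (hb : 24 * K ≤ 4 * (T1 * T2) + 36) (h8 : c % 8 = 3) :
    ∃ A : Fin c → Matrix (Fin (3 + 2 * T2)) (Fin (3 + 2 * T1)) ℤ,
      IsIHS (3 + 2 * T2) (3 + 2 * T1) c A := by
  refine chains h c T1 T2 K hc hT h1 h2 hF (2 * K) (4 * K) (6 * K) (10 * K) (14 * K)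
    (2) (16 * K + 2) [(4, k + 1), (8 * K + 4, k + 1)]
    (16 * K + 2) (-2) (-(16 * K + 1)) (-3) (-(8 * K + 1)) (8 * K + 3) (-(16 * K)) (8 * K + 2) (8 * K)
    (-1) (-1) (by ring) (by ring) (by omega) (by omega) (by ring) (by ring) (by ring)
    (by ring) (by ring) (by ring) (by omega) (Or.inl ⟨h8, by omega⟩) ?_ ?_ ?_ ?_
  · simp only [List.forall_mem_cons, List.not_mem_nil, false_imp_iff, implies_true, and_true]
    omega
  · intro q hq1 hq2
    simp only [List.mem_cons, List.not_mem_nil, or_false, exists_eq_or_imp, exists_eq_left]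
    omega
  · simp only [List.map_cons, List.map_nil, List.sum_cons, List.sum_nil]
    omega
  · simp only [List.map_cons, List.map_nil, List.sum_cons, List.sum_nil]
    omega

theorem fam7 (h c T1 T2 K k : ℕ) (hc : c = 2 * h + 1) (hT : T1 + T2 = 2 * K)
    (h1 : 2 ≤ T1) (h2 : 2 ≤ T2) (hF : ShiftW (2 * T2) (2 * T1) (T1 * T2 - 2))
    (hK : K = 2 * k + 4) (hT1 : T1 % 2 = 0) (hT2 : T2 % 2 = 0)
    (hb : 16 * K ≤ 4 * (T1 * T2) + 16) (h8 : c % 8 = 3) :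
    ∃ A : Fin c → Matrix (Fin (3 + 2 * T2)) (Fin (3 + 2 * T1)) ℤ,
      IsIHS (3 + 2 * T2) (3 + 2 * T1) c A := by
  refine chains h c T1 T2 K hc hT h1 h2 hF (2 * K + 2) (4 * K + 3) (6 * K + 9) (10 * K + 12) (14 * K + 14)
    (2 * K + 2) (16 * K + 14) [(6 * K + 5, 1), (8 * K + 10, k + 2)]
    (16 * K + 14) (-(6 * K + 3)) (-(10 * K + 11)) (-(6 * K + 4)) (-(8 * K + 9)) (14 * K + 13) (-(10 * K + 10)) (14 * K + 12) (-(4 * K + 2))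
    (0) (0) (by ring) (by ring) (by omega) (by omega) (by ring) (by ring) (by ring)
    (by ring) (by ring) (by ring) (by omega) (Or.inl ⟨h8, by omega⟩) ?_ ?_ ?_ ?_
  · simp only [List.forall_mem_cons, List.not_mem_nil, false_imp_iff, implies_true, and_true]
    omega
  · intro q hq1 hq2
    simp only [List.mem_cons, List.not_mem_nil, or_false, exists_eq_or_imp, exists_eq_left]
    omega
  · simp only [List.map_cons, List.map_nil, List.sum_cons, List.sum_nil]
    omega
  · simp only [List.map_cons, List.map_nil, List.sum_cons, List.sum_nil]
    omega

theorem fam8 (h c T1 T2 K k : ℕ) (hc : c = 2 * h + 1) (hT : T1 + T2 = 2 * K)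
    (h1 : 2 ≤ T1) (h2 : 2 ≤ T2) (hF : ShiftW (2 * T2) (2 * T1) (T1 * T2 - 2))
    (hK : K = 2 * k + 4) (hT1 : T1 % 2 = 0) (hT2 : T2 % 2 = 0)
    (hb : 16 * K ≤ 4 * (T1 * T2) + 16) (h8 : c % 8 = 7) :
    ∃ A : Fin c → Matrix (Fin (3 + 2 * T2)) (Fin (3 + 2 * T1)) ℤ,
      IsIHS (3 + 2 * T2) (3 + 2 * T1) c A := by
  refine chains h c T1 T2 K hc hT h1 h2 hF (2 * K) (4 * K + 8) (6 * K + 8) (10 * K + 16) (14 * K + 16)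
    (2 * K) (16 * K + 16) [(4 * K, 1), (8 * K + 12, k + 3)]
    (-(8 * K + 8)) (-(8 * K + 10)) (16 * K + 16) (4 * K + 4) (4 * K + 5) (-(8 * K + 11)) (4 * K + 6) (4 * K + 7) (-(8 * K + 9))
    (-2) (2) (by ring) (by ring) (by omega) (by omega) (by ring) (by ring) (by ring)
    (by ring) (by ring) (by ring) (by omega) (Or.inr ⟨h8, by omega⟩) ?_ ?_ ?_ ?_
  · simp only [List.forall_mem_cons, List.not_mem_nil, false_imp_iff, implies_true, and_true]
    omega
  · intro q hq1 hq2
    simp only [List.mem_cons, List.not_mem_nil, or_false, exists_eq_or_imp, exists_eq_left]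
    omega
  · simp only [List.map_cons, List.map_nil, List.sum_cons, List.sum_nil]
    omega
  · simp only [List.map_cons, List.map_nil, List.sum_cons, List.sum_nil]
    omega

theorem all_cases (c T1 T2 : ℕ) (hc : c % 4 = 3) (h1 : 2 ≤ T1) (h2 : 2 ≤ T2)
    (hp : (T1 % 2 = 0 ∧ T2 % 2 = 0) ∨ (T1 % 2 = 1 ∧ T2 % 2 = 1)) (hne : ¬ (T1 = 2 ∧ T2 = 2)) :
    ∃ A : Fin c → Matrix (Fin (3 + 2 * T2)) (Fin (3 + 2 * T1)) ℤ,
      IsIHS (3 + 2 * T2) (3 + 2 * T1) c A := by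
  obtain ⟨h, hh⟩ : ∃ h, c = 2 * h + 1 := ⟨c / 2, by omega⟩
  obtain ⟨K, hK⟩ : ∃ K, T1 + T2 = 2 * K := ⟨(T1 + T2) / 2, by omega⟩
  have h8 : c % 8 = 3 ∨ c % 8 = 7 := by omega
  rcases hp with ⟨p1, p2⟩ | ⟨p1, p2⟩
  · have hF : ShiftW (2 * T2) (2 * T1) (T1 * T2 - 2) := by
      obtain ⟨a, rfl⟩ : ∃ a, T2 = 2 * a + 2 := ⟨T2 / 2 - 1, by omega⟩
      obtain ⟨b, rfl⟩ : ∃ b, T1 = 2 * b + 2 := ⟨T1 / 2 - 1, by omega⟩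
      have := shiftW_even a b
      rwa [mul_comm (2 * a + 2)] at this
    have hb : 16 * K ≤ 4 * (T1 * T2) + 16 := by
      obtain ⟨a, rfl⟩ : ∃ a, T2 = a + 2 := ⟨T2 - 2, by omega⟩
      obtain ⟨b, rfl⟩ : ∃ b, T1 = b + 2 := ⟨T1 - 2, by omega⟩
      nlinarith [Nat.zero_le (a * b)]
    rcases Nat.mod_two_eq_zero_or_one K with hk | hk
    · obtain ⟨k, hk⟩ : ∃ k, K = 2 * k + 4 := ⟨K / 2 - 2, by omega⟩
      rcases h8 with h8 | h8
      · exact fam7 h c T1 T2 K k hh hK h1 h2 hF hk p1 p2 hb h8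
      · exact fam8 h c T1 T2 K k hh hK h1 h2 hF hk p1 p2 hb h8
    · obtain ⟨k, hk⟩ : ∃ k, K = 2 * k + 3 := ⟨K / 2 - 1, by omega⟩
      rcases h8 with h8 | h8
      · exact fam1 h c T1 T2 K k hh hK h1 h2 hF hk p1 p2 hb h8
      · exact fam4 h c T1 T2 K k hh hK h1 h2 hF hk p1 p2 hb h8
  · have hF : ShiftW (2 * T2) (2 * T1) (T1 * T2 - 2) := by
      obtain ⟨a, rfl⟩ : ∃ a, T2 = 2 * a + 3 := ⟨T2 / 2 - 1, by omega⟩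
      obtain ⟨b, rfl⟩ : ∃ b, T1 = 2 * b + 3 := ⟨T1 / 2 - 1, by omega⟩
      have := shiftW_odd a b
      rwa [mul_comm (2 * a + 3)] at this
    have hb : 24 * K ≤ 4 * (T1 * T2) + 36 := by
      obtain ⟨a, rfl⟩ : ∃ a, T2 = a + 3 := ⟨T2 - 3, by omega⟩
      obtain ⟨b, rfl⟩ : ∃ b, T1 = b + 3 := ⟨T1 - 3, by omega⟩
      nlinarith [Nat.zero_le (a * b)]
    rcases Nat.mod_two_eq_zero_or_one K with hk | hk
    · obtain ⟨k, hk⟩ : ∃ k, K = 2 * k + 4 := ⟨K / 2 - 2, by omega⟩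
      rcases h8 with h8 | h8
      · exact fam6 h c T1 T2 K k hh hK h1 h2 hF hk p1 p2 hb h8
      · exact fam5 h c T1 T2 K k hh hK h1 h2 hF hk p1 p2 hb h8
    · obtain ⟨k, hk⟩ : ∃ k, K = 2 * k + 3 := ⟨K / 2 - 1, by omega⟩
      rcases h8 with h8 | h8
      · exact fam2 h c T1 T2 K k hh hK h1 h2 hF hk p1 p2 hb h8
      · exact fam3 h c T1 T2 K k hh hK h1 h2 hF hk p1 p2 hb h8

end IHSaux

theorem exists_IHS_c3
    (m n c : ℕ) (hm : 0 < m) (hn : 0 < n) (hc : 0 < c)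
    (hcmod : c % 4 = 3)
    (hmn : (m % 4 = 1 ∧ n % 4 = 1) ∨ (m % 4 = 3 ∧ n % 4 = 3))
    (hm7 : 7 ≤ m) (hn7 : 7 ≤ n) (hne : ¬(m = 7 ∧ n = 7)) :
    ∃ A : Fin c → Matrix (Fin m) (Fin n) ℤ, IsIHS m n c A := by
  obtain ⟨T2, rfl⟩ : ∃ T2, m = 3 + 2 * T2 := ⟨(m - 3) / 2, by omega⟩
  obtain ⟨T1, rfl⟩ : ∃ T1, n = 3 + 2 * T1 := ⟨(n - 3) / 2, by omega⟩
  exact IHSaux.all_cases c T1 T2 hcmod (by omega) (by omega) (by omega) (by omega)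
end
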